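/- Let d ≥ 1, 1 < p ≤ 2, and k = 2d(1/p − 1/2). There exists a constant C > 0 such that for every 0 < ℏ ≤ 1 and every Schwartz function f on ℝ^d: ‖f‖_{L^p(ℝ^d)} ≤ C·ℏ^{d(1/p−1/2)/2}·‖V_g(D_{ℏ^{−1/2}} f)‖_{L^p(ℝ^{2d})} and ‖V_g(D_{ℏ^{−1/2}} f)‖_{L^p(ℝ^{2d})} ≤ C·ℏ^{d(1/2−1/p)/2}·‖(1−ℏΔ)^{k/2} f‖_{L^p(ℝ^d)}. -/

import Mathlib

open MeasureTheory Complex Real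
open scoped ENNReal RealInnerProductSpace

noncomputable section

abbrev E (d : ℕ) : Type := EuclideanSpace ℝ (Fin d)

/-- Phase space `ℝ^{2d} = ℝ^d × ℝ^d`. -/
abbrev P (d : ℕ) : Type := E d × E d

/-- The complex conjugate of the wave packet `π(z)g`, Gaussian window `g(y)=exp(-|y|²/2)`. -/
def pkbar (d : ℕ) (z : P d) (y : E d) : ℂ :=
  Complex.exp (-Complex.I * (⟪y, z.2⟫ : ℂ)) * Real.exp (-‖y - z.1‖ ^ 2 / 2)

/-- The short-time Fourier transform with Gaussian window. -/
def stft (d : ℕ) (u : E d → ℂ) (z : P d) : ℂ := ∫ y, u y * pkbar d z y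

/-- The Fourier transform `ℱu(ξ) = ∫ exp(-i x·ξ) u(x) dx`. -/
def FT (d : ℕ) (u : E d → ℂ) (ξ : E d) : ℂ :=
  ∫ x, Complex.exp (-Complex.I * (⟪x, ξ⟫ : ℂ)) * u x

/-- The semiclassical Bessel potential `(1-ℏΔ)^{k/2} u = ℱ⁻¹((1+ℏ|ξ|²)^{k/2} ℱu)`. -/
def besselh (d : ℕ) (h k : ℝ) (u : E d → ℂ) (x : E d) : ℂ :=
  (((2 * π) ^ d : ℝ) : ℂ)⁻¹ *
    ∫ ξ, Complex.exp (Complex.I * (⟪x, ξ⟫ : ℂ)) *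
      (((1 + h * ‖ξ‖ ^ 2) ^ (k / 2) : ℝ) : ℂ) * FT d u ξ

/-- The dilation `D_{ℏ^{-1/2}} u (x) = ℏ^{d/4}·u(ℏ^{1/2} x)`. -/
def dil (d : ℕ) (h : ℝ) (u : E d → ℂ) (x : E d) : ℂ :=
  (h ^ ((d : ℝ) / 4) : ℝ) * u ((h ^ ((1 : ℝ) / 2) : ℝ) • x)

/-!
Conjugation by the dilation reduces both bounds to `ℏ = 1`. There
`(1 + |ξ|²)^{k/2} V_g f(x, ξ)` is an integral operator applied to `(1 - Δ)^{k/2} f`, and writing the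
Bessel symbol as a superposition of Gaussians bounds its kernel by `C exp(-|y - x|/2)` uniformly in
`ξ`. Multiplied by `(1 + |ξ|²)^{d/2}` and measured with `(1 + |ξ|²)^{-d} dx dξ`, this operator is of
strong type `(2,2)` by Plancherel and of weak type `(1,1)`, so Marcinkiewicz interpolation covers
`1 < p ≤ 2`; the power of `1 + |ξ|²` left over is `(kp - d(2 - p))/2`, which is nonnegative exactly
when `k ≥ 2d(1/p - 1/2)`. Conversely, the inversion formula recovers `f` from `V_g f` through the
synthesis operator, which is of strong type `(1,1)` because its kernel is integrable in `y` and of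
strong type `(2,2)` by duality with `V_g`.
-/

section Marcinkiewicz

lemma lintegral_Iio_rpow {s a : ℝ} (hs : -1 < s) (ha : 0 ≤ a) :
    ∫⁻ t in Set.Ioi 0 ∩ Set.Iio a, ENNReal.ofReal (t ^ s) =
      ENNReal.ofReal (a ^ (s + 1) / (s + 1)) := by
  rw [Set.Ioi_inter_Iio, restrict_Ioo_eq_restrict_Ioc, ← ofReal_integral_eq_lintegral_ofReal,
    ← intervalIntegral.integral_of_le ha, integral_rpow (Or.inl hs),
    Real.zero_rpow (by linarith), sub_zero]
  · exact (intervalIntegrable_iff_integrableOn_Ioc_of_le ha).1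
      (intervalIntegral.intervalIntegrable_rpow' hs)
  · filter_upwards [ae_restrict_mem measurableSet_Ioc] with t ht
    exact Real.rpow_nonneg ht.1.le _

lemma lintegral_Ici_rpow {s a : ℝ} (hs : s < -1) (ha : 0 < a) :
    ∫⁻ t in Set.Ici a, ENNReal.ofReal (t ^ s) = ENNReal.ofReal (a ^ (s + 1) / -(s + 1)) := by
  rw [← restrict_Ioi_eq_restrict_Ici, ← ofReal_integral_eq_lintegral_ofReal,
    integral_Ioi_rpow_of_lt hs ha, neg_div, div_neg]
  · exact integrableOn_Ioi_rpow_of_lt hs ha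
  · filter_upwards [ae_restrict_mem measurableSet_Ioi] with t ht
    exact Real.rpow_nonneg (ha.trans ht).le _

variable {Y Z V W : Type*} [MeasurableSpace Y] [MeasurableSpace Z] [NormedAddCommGroup V]
  [NormedAddCommGroup W] {μ : Measure Y} {ν : Measure Z}

lemma ofReal_norm_rpow {q : ℝ} (hq : 0 ≤ q) (v : V) : ENNReal.ofReal (‖v‖ ^ q) = ‖v‖ₑ ^ q := by
  rw [← ofReal_norm, ENNReal.ofReal_rpow_of_nonneg (norm_nonneg _) hq]

lemma measurable_lintegral_enorm_indicator [SFinite μ] (q : ℝ) {s : Set (ℝ × Y)}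
    (hs : MeasurableSet s) {F : Y → V} (hF : StronglyMeasurable F) :
    Measurable fun t : ℝ => ∫⁻ y, ‖{y | (t, y) ∈ s}.indicator F y‖ₑ ^ q ∂μ :=
  Measurable.lintegral_prod_right' (f := fun x : ℝ × Y => ‖s.indicator (fun x => F x.2) x‖ₑ ^ q)
    (((hF.comp_measurable measurable_snd).indicator hs).enorm.pow_const q)

lemma lintegral_lintegral_enorm_indicator_mul [SFinite μ] {q : ℝ} (hq : 0 < q) {w : ℝ → ℝ≥0∞}
    (hw : Measurable w) (hw_top : ∀ t, w t ≠ ∞) {s : Set (ℝ × Y)} (hs : MeasurableSet s)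
    {F : Y → V} (hF : StronglyMeasurable F) :
    ∫⁻ t in Set.Ioi 0, (∫⁻ y, ‖{y | (t, y) ∈ s}.indicator F y‖ₑ ^ q ∂μ) * w t =
      ∫⁻ y, ‖F y‖ₑ ^ q * (∫⁻ t in Set.Ioi 0 ∩ {t | (t, y) ∈ s}, w t) ∂μ := by
  have h_eq (t : ℝ) (y : Y) : ‖{y | (t, y) ∈ s}.indicator F y‖ₑ ^ q * w t =
      ‖F y‖ₑ ^ q * {t | (t, y) ∈ s}.indicator w t := by
    by_cases h : (t, y) ∈ s <;> simp [h, hq]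
  have h_meas : Measurable fun x : ℝ × Y => ‖F x.2‖ₑ ^ q * {t | (t, x.2) ∈ s}.indicator w x.1 :=
    ((hF.enorm.comp measurable_snd).pow_const q).mul ((hw.comp measurable_fst).indicator hs)
  simp_rw [← lintegral_mul_const' _ _ (hw_top _), h_eq]
  rw [lintegral_lintegral_swap h_meas.aemeasurable]
  congr 1 with y
  have hsy : MeasurableSet {t | (t, y) ∈ s} := measurable_prodMk_right hs
  rw [lintegral_const_mul _ (hw.indicator hsy), setLIntegral_indicator hsy, Set.inter_comm]

lemma measurableSet_fst_lt_norm {F : Y → V} (hF : StronglyMeasurable F) :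
    MeasurableSet {x : ℝ × Y | x.1 < ‖F x.2‖} :=
  measurableSet_lt measurable_fst (hF.norm.measurable.comp measurable_snd)

lemma measurableSet_norm_le_fst {F : Y → V} (hF : StronglyMeasurable F) :
    MeasurableSet {x : ℝ × Y | ‖F x.2‖ ≤ x.1} :=
  measurableSet_le (hF.norm.measurable.comp measurable_snd) measurable_fst

lemma lintegral_lintegral_high_truncation [SFinite μ] {p q : ℝ} (hq : 0 < q) (hqp : q < p)
    {F : Y → V} (hF : StronglyMeasurable F) :
    ∫⁻ t in Set.Ioi 0, (∫⁻ y, ‖{y | t < ‖F y‖}.indicator F y‖ₑ ^ q ∂μ) *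
        ENNReal.ofReal (t ^ (p - q - 1)) =
      ENNReal.ofReal (p - q)⁻¹ * ∫⁻ y, ‖F y‖ₑ ^ p ∂μ := by
  refine (lintegral_lintegral_enorm_indicator_mul hq (by fun_prop)
    (fun _ => ENNReal.ofReal_ne_top) (measurableSet_fst_lt_norm hF) hF).trans ?_
  rw [← lintegral_const_mul' _ _ ENNReal.ofReal_ne_top]
  congr 1 with y
  change _ * ∫⁻ t in Set.Ioi 0 ∩ Set.Iio ‖F y‖, _ = _
  rw [lintegral_Iio_rpow (by linarith) (norm_nonneg _), sub_add_cancel, div_eq_inv_mul,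
    ENNReal.ofReal_mul (by simpa using hqp.le), ofReal_norm_rpow (by linarith), mul_left_comm,
    ← ENNReal.rpow_add_of_nonneg _ _ hq.le (by linarith), add_sub_cancel]

lemma lintegral_lintegral_low_truncation [SFinite μ] {p q : ℝ} (hp : 0 < p) (hpq : p < q)
    {F : Y → V} (hF : StronglyMeasurable F) :
    ∫⁻ t in Set.Ioi 0, (∫⁻ y, ‖{y | ‖F y‖ ≤ t}.indicator F y‖ₑ ^ q ∂μ) *
        ENNReal.ofReal (t ^ (p - q - 1)) =
      ENNReal.ofReal (q - p)⁻¹ * ∫⁻ y, ‖F y‖ₑ ^ p ∂μ := by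
  refine (lintegral_lintegral_enorm_indicator_mul (hp.trans hpq) (by fun_prop)
    (fun _ => ENNReal.ofReal_ne_top) (measurableSet_norm_le_fst hF) hF).trans ?_
  rw [← lintegral_const_mul' _ _ ENNReal.ofReal_ne_top]
  congr 1 with y
  rcases eq_or_ne (F y) 0 with hy | hy
  · simp [hy, hp, hp.trans hpq]
  have hy' : 0 < ‖F y‖ := norm_pos_iff.2 hy
  change _ * ∫⁻ t in Set.Ioi 0 ∩ Set.Ici ‖F y‖, _ = _
  rw [Set.inter_eq_right.2 (Set.Ici_subset_Ioi.2 hy'), lintegral_Ici_rpow (by linarith) hy',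
    sub_add_cancel, neg_sub, div_eq_inv_mul, ENNReal.ofReal_mul (by simpa using hpq.le),
    ← ENNReal.ofReal_rpow_of_pos hy', ofReal_norm, mul_left_comm,
    ← ENNReal.rpow_add _ _ (enorm_ne_zero.2 hy) enorm_ne_top, add_sub_cancel]

/-- `T`, an operator on integrable functions, is of weak type `(q, q)` with constant `C`. Only
strongly measurable representatives are tested, as `T` need not respect almost everywhere
equality. -/
def HasWeakType (T : (Y → V) → Z → W) (q : ℝ) (μ : Measure Y) (ν : Measure Z) (C : ℝ≥0∞) : Prop :=
  ∀ ⦃F : Y → V⦄, StronglyMeasurable F → Integrable F μ → ∀ ⦃t : ℝ⦄, 0 < t →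
    ν {z | t < ‖T F z‖} ≤ C * (∫⁻ y, ‖F y‖ₑ ^ q ∂μ) * ENNReal.ofReal (t ^ (-q))

/-- `T`, an operator on integrable functions, is of strong type `(q, q)` with constant `C`; as in
`HasWeakType`, only strongly measurable representatives are tested. -/
def HasStrongType (T : (Y → V) → Z → W) (q : ℝ) (μ : Measure Y) (ν : Measure Z) (C : ℝ≥0∞) :
    Prop :=
  ∀ ⦃F : Y → V⦄, StronglyMeasurable F → Integrable F μ →
    ∫⁻ z, ‖T F z‖ₑ ^ q ∂ν ≤ C * ∫⁻ y, ‖F y‖ₑ ^ q ∂μ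

lemma HasStrongType.hasWeakType {T : (Y → V) → Z → W} {q : ℝ} (hq : 0 < q) {C : ℝ≥0∞}
    (hT : HasStrongType T q μ ν C)
    (hT_meas : ∀ F, StronglyMeasurable F → Integrable F μ → AEStronglyMeasurable (T F) ν) :
    HasWeakType T q μ ν C := by
  intro F hFm hF t ht
  have htq : 0 < t ^ q := Real.rpow_pos_of_pos ht q
  have h_sub : {z | t < ‖T F z‖} ⊆ {z | ENNReal.ofReal (t ^ q) ≤ ‖T F z‖ₑ ^ q} := fun z hz => by
    rw [Set.mem_ofPred_eq, ← ofReal_norm_rpow hq.le]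
    exact ENNReal.ofReal_le_ofReal (Real.rpow_le_rpow ht.le (le_of_lt hz) hq.le)
  calc ν {z | t < ‖T F z‖}
      ≤ (∫⁻ z, ‖T F z‖ₑ ^ q ∂ν) / ENNReal.ofReal (t ^ q) :=
        (measure_mono h_sub).trans <| meas_ge_le_lintegral_div
          ((hT_meas F hFm hF).enorm.pow_const q) (by simpa using htq) ENNReal.ofReal_ne_top
    _ ≤ C * (∫⁻ y, ‖F y‖ₑ ^ q ∂μ) * ENNReal.ofReal (t ^ (-q)) := by
        rw [div_eq_mul_inv, ← ENNReal.ofReal_inv_of_pos htq, ← Real.rpow_neg ht.le]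
        gcongr
        exact hT hFm hF

variable {T : (Y → V) → Z → W} {p p₀ p₁ : ℝ} {C₀ C₁ : ℝ≥0∞} {F : Y → V}

lemma meas_lt_norm_le_truncations
    (hT : ∀ F G, Integrable F μ → Integrable G μ → ∀ z, ‖T (F + G) z‖ ≤ ‖T F z‖ + ‖T G z‖)
    (h₀ : HasWeakType T p₀ μ ν C₀) (h₁ : HasWeakType T p₁ μ ν C₁)
    (hFm : StronglyMeasurable F) (hF : Integrable F μ) {t : ℝ} (ht : 0 < t) :
    ν {z | t < ‖T F z‖} ≤
      C₀ * (∫⁻ y, ‖{y | t < ‖F y‖}.indicator F y‖ₑ ^ p₀ ∂μ) * ENNReal.ofReal ((t / 2) ^ (-p₀)) +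
      C₁ * (∫⁻ y, ‖{y | ‖F y‖ ≤ t}.indicator F y‖ₑ ^ p₁ ∂μ) * ENNReal.ofReal ((t / 2) ^ (-p₁)) := by
  set hi := {y | t < ‖F y‖}.indicator F with h_hi
  set lo := {y | ‖F y‖ ≤ t}.indicator F with h_lo
  have hs_hi : MeasurableSet {y | t < ‖F y‖} :=
    measurableSet_lt measurable_const hFm.norm.measurable
  have hs_lo : MeasurableSet {y | ‖F y‖ ≤ t} :=
    measurableSet_le hFm.norm.measurable measurable_const
  have h_split : hi + lo = F := by
    have : {y | ‖F y‖ ≤ t} = {y | t < ‖F y‖}ᶜ := by ext y; simp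
    rw [h_hi, h_lo, this, Set.indicator_self_add_compl]
  have h_sub : {z | t < ‖T F z‖} ⊆ {z | t / 2 < ‖T hi z‖} ∪ {z | t / 2 < ‖T lo z‖} := by
    intro z (hz : t < ‖T F z‖)
    have h_le := hT hi lo (hF.indicator hs_hi) (hF.indicator hs_lo) z
    rw [h_split] at h_le
    by_contra h
    simp only [Set.mem_union, Set.mem_ofPred_eq, not_or, not_lt] at h
    linarith
  refine (measure_mono h_sub).trans ((measure_union_le _ _).trans (add_le_add ?_ ?_))
  · exact h₀ (hFm.indicator hs_hi) (hF.indicator hs_hi) (half_pos ht)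
  · exact h₁ (hFm.indicator hs_lo) (hF.indicator hs_lo) (half_pos ht)

lemma ofReal_half_rpow_neg_mul {t : ℝ} (ht : 0 < t) (p q : ℝ) :
    ENNReal.ofReal ((t / 2) ^ (-q)) * ENNReal.ofReal (t ^ (p - 1)) =
      ENNReal.ofReal (2 ^ q) * ENNReal.ofReal (t ^ (p - q - 1)) := by
  rw [← ENNReal.ofReal_mul (by positivity), ← ENNReal.ofReal_mul (by positivity),
    Real.div_rpow ht.le zero_le_two, Real.rpow_neg zero_le_two, div_inv_eq_mul,
    show p - q - 1 = -q + (p - 1) by ring, Real.rpow_add ht]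
  congr 1
  ring

theorem lintegral_rpow_le_of_hasWeakType [SFinite μ] (hp₀ : 0 < p₀) (hp₀p : p₀ < p) (hpp₁ : p < p₁)
    (hT : ∀ F G, Integrable F μ → Integrable G μ → ∀ z, ‖T (F + G) z‖ ≤ ‖T F z‖ + ‖T G z‖)
    (h₀ : HasWeakType T p₀ μ ν C₀) (h₁ : HasWeakType T p₁ μ ν C₁)
    (hFm : StronglyMeasurable F) (hF : Integrable F μ) (hTF : AEStronglyMeasurable (T F) ν) :
    ∫⁻ z, ‖T F z‖ₑ ^ p ∂ν ≤ ENNReal.ofReal p *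
      (C₀ * ENNReal.ofReal (2 ^ p₀) * ENNReal.ofReal (p - p₀)⁻¹ +
        C₁ * ENNReal.ofReal (2 ^ p₁) * ENNReal.ofReal (p₁ - p)⁻¹) * ∫⁻ y, ‖F y‖ₑ ^ p ∂μ := by
  have hp : 0 < p := hp₀.trans hp₀p
  have h_layer : ∫⁻ z, ‖T F z‖ₑ ^ p ∂ν = ENNReal.ofReal p *
      ∫⁻ t in Set.Ioi 0, ν {z | t < ‖T F z‖} * ENNReal.ofReal (t ^ (p - 1)) := by
    simp_rw [← ofReal_norm_rpow hp.le]
    exact lintegral_rpow_eq_lintegral_meas_lt_mul ν (.of_forall fun z => norm_nonneg _)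
      hTF.norm.aemeasurable hp
  have h_point : ∀ t ∈ Set.Ioi (0 : ℝ), ν {z | t < ‖T F z‖} * ENNReal.ofReal (t ^ (p - 1)) ≤
      C₀ * ENNReal.ofReal (2 ^ p₀) * ((∫⁻ y, ‖{y | t < ‖F y‖}.indicator F y‖ₑ ^ p₀ ∂μ) *
        ENNReal.ofReal (t ^ (p - p₀ - 1))) +
      C₁ * ENNReal.ofReal (2 ^ p₁) * ((∫⁻ y, ‖{y | ‖F y‖ ≤ t}.indicator F y‖ₑ ^ p₁ ∂μ) *
        ENNReal.ofReal (t ^ (p - p₁ - 1))) := by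
    intro t ht
    grw [meas_lt_norm_le_truncations hT h₀ h₁ hFm hF ht]
    rw [add_mul, mul_assoc (C₀ * _), mul_assoc (C₁ * _), ofReal_half_rpow_neg_mul ht,
      ofReal_half_rpow_neg_mul ht]
    exact le_of_eq (by ring)
  have h_meas_hi : Measurable fun t : ℝ =>
      (∫⁻ y, ‖{y | t < ‖F y‖}.indicator F y‖ₑ ^ p₀ ∂μ) * ENNReal.ofReal (t ^ (p - p₀ - 1)) :=
    (measurable_lintegral_enorm_indicator p₀ (measurableSet_fst_lt_norm hFm) hFm).mul (by fun_prop)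
  have h_meas_lo : Measurable fun t : ℝ =>
      (∫⁻ y, ‖{y | ‖F y‖ ≤ t}.indicator F y‖ₑ ^ p₁ ∂μ) * ENNReal.ofReal (t ^ (p - p₁ - 1)) :=
    (measurable_lintegral_enorm_indicator p₁ (measurableSet_norm_le_fst hFm) hFm).mul (by fun_prop)
  rw [h_layer, mul_assoc (ENNReal.ofReal p)]
  gcongr
  refine (setLIntegral_mono' measurableSet_Ioi h_point).trans (le_of_eq ?_)
  rw [lintegral_add_left (h_meas_hi.const_mul _), lintegral_const_mul _ h_meas_hi,
    lintegral_const_mul _ h_meas_lo, lintegral_lintegral_high_truncation hp₀ hp₀p hFm,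
    lintegral_lintegral_low_truncation hp hpp₁ hFm]
  ring

end Marcinkiewicz

section Plancherel

open FourierTransform SchwartzMap

variable {V H : Type*} [NormedAddCommGroup V] [InnerProductSpace ℝ V] [FiniteDimensional ℝ V]
  [MeasurableSpace V] [BorelSpace V] [NormedAddCommGroup H] [InnerProductSpace ℂ H]

lemma lintegral_comp_smul {c : ℝ} (hc : c ≠ 0) (f : V → ℝ≥0∞) :
    ∫⁻ x, f (c • x) = ENNReal.ofReal |(c ^ Module.finrank ℝ V)⁻¹| * ∫⁻ x, f x := by
  rw [← smul_eq_mul, ← lintegral_smul_measure, ← Measure.map_addHaar_smul volume hc]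
  exact (lintegral_map_equiv f (Homeomorph.smulOfNeZero c hc).toMeasurableEquiv).symm

lemma continuous_fourier {f : V → H} (hf : Integrable f) : Continuous (𝓕 f) :=
  VectorFourier.fourierIntegral_continuous Real.continuous_fourierChar
    (L := innerₗ V) continuous_inner hf

variable [CompleteSpace H]

lemma integral_smul_fourier_eq {f : V → H} (hf : Integrable f) (φ : 𝓢(V, ℂ)) :
    ∫ x, φ x • 𝓕 f x = ∫ x, 𝓕 φ x • f x := by
  have := VectorFourier.integral_fourierIntegral_smul_eq_flip (L := innerₗ V)
    Real.continuous_fourierChar continuous_inner (φ.integrable (μ := volume)) hf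
  rw [flip_innerₗ] at this
  exact this.symm

lemma fourier_toLp_ae_eq {f : V → H} (hf₁ : Integrable f) (hf₂ : MemLp f 2) :
    (𝓕 (hf₂.toLp f) : Lp H 2) =ᵐ[volume] 𝓕 f := by
  refine ae_eq_of_integral_contDiff_smul_eq
    ((Lp.memLp _).locallyIntegrable one_le_two)
    (continuous_fourier hf₁).locallyIntegrable fun g hg hg_supp => ?_
  set φ : 𝓢(V, ℂ) := (hg_supp.comp_left Complex.ofReal_zero : HasCompactSupport
    (Complex.ofReal ∘ g)).toSchwartzMap (Complex.ofRealCLM.contDiff.comp hg)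
  have hφg (x : V) (v : H) : g x • v = φ x • v := (Complex.coe_smul (g x) v).symm
  simp only [hφg]
  calc ∫ x, φ x • (𝓕 (hf₂.toLp f) : Lp H 2 (volume : Measure V)) x
      = Lp.toTemperedDistribution (hf₂.toLp f) (𝓕 φ) := by
        rw [← TemperedDistribution.fourier_apply, Lp.fourier_toTemperedDistribution_eq,
          Lp.toTemperedDistribution_apply]
    _ = ∫ x, 𝓕 φ x • f x := by
        rw [Lp.toTemperedDistribution_apply]
        refine integral_congr_ae ?_
        filter_upwards [hf₂.coeFn_toLp] with x hx
        rw [hx]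
    _ = ∫ x, φ x • 𝓕 f x := (integral_smul_fourier_eq hf₁ φ).symm

lemma lintegral_enorm_fourier_sq_eq {f : V → H} (hf₁ : Integrable f) (hf₂ : MemLp f 2) :
    ∫⁻ ξ, ‖𝓕 f ξ‖ₑ ^ (2 : ℝ) = ∫⁻ x, ‖f x‖ₑ ^ (2 : ℝ) := by
  have h_norm : eLpNorm (𝓕 f) 2 = eLpNorm f 2 := by
    rw [← eLpNorm_congr_ae (fourier_toLp_ae_eq hf₁ hf₂), ← eLpNorm_congr_ae hf₂.coeFn_toLp,
      ← Lp.enorm_def, ← Lp.enorm_def, ← ofReal_norm, ← ofReal_norm, Lp.norm_fourier_eq]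
  have h_pow := congrArg (· ^ (2 : ℝ)) h_norm
  exact (eLpNorm_nnreal_pow_eq_lintegral (p := 2) two_ne_zero).symm.trans
    (h_pow.trans (eLpNorm_nnreal_pow_eq_lintegral (p := 2) two_ne_zero))

end Plancherel

section FourierTransform

variable {d : ℕ} {u v : E d → ℂ}

open FourierTransform

lemma FT_eq_fourier (u : E d → ℂ) (ξ : E d) : FT d u ξ = 𝓕 u ((2 * π)⁻¹ • ξ) := by
  rw [Real.fourier_eq', FT]
  congr 1 with v
  rw [smul_eq_mul, real_inner_smul_right]
  congr 2
  push_cast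
  field_simp

lemma FT_eq_fourierIntegral (u : E d → ℂ) :
    FT d u =
      VectorFourier.fourierIntegral Real.fourierChar volume ((2 * π)⁻¹ • innerₗ (E d)) u := by
  ext ξ
  rw [FT, VectorFourier.fourierIntegral]
  congr 1 with x
  rw [Circle.smul_def, Real.fourierChar_apply, smul_eq_mul]
  congr 2
  simp only [LinearMap.smul_apply, innerₗ_apply_apply, smul_eq_mul]
  push_cast
  field_simp

lemma FT_two_pi_smul (u : E d → ℂ) (η : E d) : FT d u ((2 * π) • η) = 𝓕 u η := by
  rw [FT_eq_fourier, smul_smul, inv_mul_cancel₀ (by positivity), one_smul]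

lemma continuous_FT (hu : Integrable u) : Continuous (FT d u) := by
  rw [funext (FT_eq_fourier u)]
  exact (continuous_fourier hu).comp (continuous_const_smul _)

lemma norm_FT_le (u : E d → ℂ) (ξ : E d) : ‖FT d u ξ‖ ≤ ∫ x, ‖u x‖ := by
  refine (norm_integral_le_integral_norm _).trans_eq (integral_congr_ae (.of_forall fun x => ?_))
  simp [Complex.norm_exp]

lemma lintegral_enorm_FT_sq_le (hu : Integrable u) :
    ∫⁻ ξ, ‖FT d u ξ‖ₑ ^ (2 : ℝ) ≤ ENNReal.ofReal ((2 * π) ^ d) * ∫⁻ x, ‖u x‖ₑ ^ (2 : ℝ) := by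
  rcases eq_or_ne (∫⁻ x, ‖u x‖ₑ ^ (2 : ℝ)) ∞ with h_top | h_top
  · rw [h_top, ENNReal.mul_top (by positivity)]
    exact le_top
  have hu₂ : MemLp u 2 := ⟨hu.aestronglyMeasurable,
    (eLpNorm_lt_top_iff_lintegral_rpow_enorm_lt_top two_ne_zero ENNReal.ofNat_ne_top).2
      h_top.lt_top⟩
  rw [← lintegral_enorm_fourier_sq_eq hu hu₂]
  simp_rw [FT_eq_fourier]
  rw [lintegral_comp_smul (V := E d) (by positivity) (fun ξ => ‖𝓕 u ξ‖ₑ ^ (2 : ℝ)),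
    finrank_euclideanSpace_fin, inv_pow, inv_inv, abs_of_pos (by positivity)]

lemma integral_mul_FT_eq (hu : Integrable u) (hv : Integrable v) :
    ∫ η, FT d u η * v η = ∫ x, u x * FT d v x := by
  rw [FT_eq_fourierIntegral, FT_eq_fourierIntegral]
  have := VectorFourier.integral_fourierIntegral_smul_eq_flip
    (L := (2 * π)⁻¹ • innerₗ (E d)) Real.continuous_fourierChar
    (continuous_const.mul continuous_inner) hu hv
  rwa [show ((2 * π)⁻¹ • innerₗ (E d)).flip = (2 * π)⁻¹ • innerₗ (E d) from
    LinearMap.ext₂ fun x y => congrArg _ (real_inner_comm x y)] at this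

lemma integral_exp_inner_mul_eq_fourierInv (v : E d → ℂ) (x : E d) :
    ∫ ξ, Complex.exp (Complex.I * (⟪x, ξ⟫ : ℂ)) * v ξ =
      ((2 * π) ^ d : ℝ) * 𝓕⁻ (fun η => v ((2 * π) • η)) x := by
  rw [Real.fourierInv_eq']
  have h := Measure.integral_comp_smul volume
    (fun ξ : E d => Complex.exp (Complex.I * (⟪x, ξ⟫ : ℂ)) * v ξ) (2 * π)
  have hpos : (0 : ℝ) < (2 * π) ^ d := by positivity
  rw [finrank_euclideanSpace_fin, abs_of_pos (by positivity)] at h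
  have h' : ∫ η : E d, Complex.exp ((2 * π * ⟪η, x⟫ : ℝ) * Complex.I) • v ((2 * π) • η) =
      ((2 * π) ^ d)⁻¹ • ∫ ξ, Complex.exp (Complex.I * (⟪x, ξ⟫ : ℂ)) * v ξ := by
    rw [← h]
    congr 1 with η
    rw [smul_eq_mul, real_inner_smul_right, real_inner_comm, mul_comm Complex.I]
  rw [h', Complex.real_smul, ← mul_assoc, ← Complex.ofReal_mul, mul_inv_cancel₀ hpos.ne',
    Complex.ofReal_one, one_mul]

lemma integral_exp_inner_mul_FT (hc : Continuous v) (hv : Integrable v)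
    (hFT : Integrable (FT d v)) (x : E d) :
    ∫ ξ, Complex.exp (Complex.I * (⟪x, ξ⟫ : ℂ)) * FT d v ξ = ((2 * π) ^ d : ℝ) * v x := by
  have h_int : Integrable (𝓕 v) := by
    simpa only [FT_two_pi_smul] using hFT.comp_smul (R := 2 * π) (by positivity)
  rw [integral_exp_inner_mul_eq_fourierInv, funext (FT_two_pi_smul v),
    hc.fourierInv_fourier_eq hv h_int]

end FourierTransform

section KernelOperator

variable {Y Z : Type*} [MeasurableSpace Y] [MeasurableSpace Z] {μ : Measure Y} {ν : Measure Z}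

/-- The operator with integral kernel `K`, the common form of the wave packet transforms and their
adjoints. -/
def kernelOperator (μ : Measure Y) (K : Z → Y → ℂ) (F : Y → ℂ) (z : Z) : ℂ :=
  ∫ y, K z y * F y ∂μ

variable {K : Z → Y → ℂ} {F G : Y → ℂ} {M : ℝ} {B C : ℝ≥0∞}

lemma stronglyMeasurable_kernelOperator [SFinite μ]
    (hK : StronglyMeasurable (Function.uncurry K)) (hF : StronglyMeasurable F) :
    StronglyMeasurable (kernelOperator μ K F) :=
  StronglyMeasurable.integral_prod_right' (f := fun q : Z × Y => K q.1 q.2 * F q.2)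
    (hK.mul (hF.comp_measurable measurable_snd))

lemma integrable_kernel_mul (hK : StronglyMeasurable (Function.uncurry K))
    (hM : ∀ z y, ‖K z y‖ ≤ M) (hF : Integrable F μ) (z : Z) :
    Integrable (fun y => K z y * F y) μ :=
  hF.bdd_mul (hK.comp_measurable measurable_prodMk_left).aestronglyMeasurable
    (.of_forall (hM z))

lemma kernelOperator_add (hK : StronglyMeasurable (Function.uncurry K))
    (hM : ∀ z y, ‖K z y‖ ≤ M) (hF : Integrable F μ) (hG : Integrable G μ) (z : Z) :
    kernelOperator μ K (F + G) z = kernelOperator μ K F z + kernelOperator μ K G z := by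
  simp only [kernelOperator, Pi.add_apply, mul_add]
  exact integral_add (integrable_kernel_mul hK hM hF z) (integrable_kernel_mul hK hM hG z)

omit [MeasurableSpace Z] in
lemma norm_kernelOperator_le (hM : ∀ z y, ‖K z y‖ ≤ M) (hF : Integrable F μ) (z : Z) :
    ‖kernelOperator μ K F z‖ ≤ M * ∫ y, ‖F y‖ ∂μ := by
  rw [← integral_const_mul]
  refine norm_integral_le_of_norm_le (hF.norm.const_mul M) (.of_forall fun y => ?_)
  rw [norm_mul]
  gcongr
  exact hM z y

lemma hasStrongType_one_kernelOperator [SFinite μ] [SFinite ν]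
    (hK : StronglyMeasurable (Function.uncurry K)) (hB : ∀ y, ∫⁻ z, ‖K z y‖ₑ ∂ν ≤ B) :
    HasStrongType (kernelOperator μ K) 1 μ ν B := by
  intro F hFm _
  simp only [ENNReal.rpow_one]
  have h_meas : Measurable fun q : Z × Y => ‖K q.1 q.2 * F q.2‖ₑ :=
    (hK.mul (hFm.comp_measurable measurable_snd)).enorm
  calc ∫⁻ z, ‖kernelOperator μ K F z‖ₑ ∂ν
      ≤ ∫⁻ z, ∫⁻ y, ‖K z y * F y‖ₑ ∂μ ∂ν :=
        lintegral_mono fun z => enorm_integral_le_lintegral_enorm _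
    _ = ∫⁻ y, (∫⁻ z, ‖K z y‖ₑ ∂ν) * ‖F y‖ₑ ∂μ := by
        rw [lintegral_lintegral_swap h_meas.aemeasurable]
        simp only [enorm_mul, lintegral_mul_const' _ _ enorm_ne_top]
    _ ≤ B * ∫⁻ y, ‖F y‖ₑ ∂μ := by
        rw [← lintegral_const_mul _ hFm.enorm]
        gcongr with y
        exact hB y

lemma integrable_kernelOperator [SFinite μ] [SFinite ν]
    (hK : StronglyMeasurable (Function.uncurry K)) (hB : ∀ y, ∫⁻ z, ‖K z y‖ₑ ∂ν ≤ B)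
    (hB_top : B ≠ ∞) (hFm : StronglyMeasurable F) (hF : Integrable F μ) :
    Integrable (kernelOperator μ K F) ν := by
  have h := hasStrongType_one_kernelOperator (μ := μ) hK hB hFm hF
  simp only [ENNReal.rpow_one] at h
  exact ⟨(stronglyMeasurable_kernelOperator hK hFm).aestronglyMeasurable,
    h.trans_lt (ENNReal.mul_lt_top hB_top.lt_top hF.2)⟩

lemma integral_star_mul_kernelOperator [SFinite μ] [SFinite ν]
    (hK : StronglyMeasurable (Function.uncurry K)) (hM : ∀ z y, ‖K z y‖ ≤ M)
    (hF : Integrable F μ) {W : Z → ℂ} (hW : Integrable W ν) :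
    ∫ z, star (W z) * kernelOperator μ K F z ∂ν =
      ∫ y, star (kernelOperator ν (fun y z => star (K z y)) W y) * F y ∂μ := by
  have h_int : Integrable (fun q : Z × Y => K q.1 q.2 * (star (W q.1) * F q.2)) (ν.prod μ) :=
    ((Complex.conjCLE.toContinuousLinearMap.integrable_comp hW).mul_prod hF).bdd_mul
      hK.aestronglyMeasurable (.of_forall fun q => hM q.1 q.2)
  calc ∫ z, star (W z) * kernelOperator μ K F z ∂ν
      = ∫ z, ∫ y, K z y * (star (W z) * F y) ∂μ ∂ν := by
        simp only [kernelOperator, ← integral_const_mul, mul_left_comm]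
    _ = ∫ y, ∫ z, K z y * (star (W z) * F y) ∂ν ∂μ := integral_integral_swap h_int
    _ = ∫ y, star (kernelOperator ν (fun y z => star (K z y)) W y) * F y ∂μ := by
        simp only [kernelOperator, RCLike.star_def, ← integral_conj, map_mul, conj_conj,
          ← integral_mul_const, mul_assoc]

lemma integrable_norm_sq_of_bounded (hM : ∀ y, ‖F y‖ ≤ M) (hF : Integrable F μ) :
    Integrable (fun y => ‖F y‖ ^ 2) μ := by
  simp only [sq]
  exact hF.norm.bdd_mul hF.1.norm (.of_forall fun y => by rw [norm_norm]; exact hM y)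

lemma lintegral_enorm_sq_eq_enorm_integral (hF : Integrable (fun y => ‖F y‖ ^ 2) μ) :
    ∫⁻ y, ‖F y‖ₑ ^ (2 : ℝ) ∂μ = ‖∫ y, star (F y) * F y ∂μ‖ₑ := by
  have h_sq (y : Y) : star (F y) * F y = ((‖F y‖ ^ 2 : ℝ) : ℂ) := by
    rw [RCLike.star_def, conj_mul', ofReal_pow]
  simp only [h_sq]
  rw [integral_complex_ofReal, ← ofReal_norm, Complex.norm_real,
    Real.norm_of_nonneg (integral_nonneg fun y => by positivity),
    ofReal_integral_eq_lintegral_ofReal hF (.of_forall fun y => by positivity)]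
  simp only [← Real.rpow_two, ofReal_norm_rpow zero_le_two]

lemma le_mul_of_le_rpow_half_mul_rpow_half {X w : ℝ≥0∞} (hX : X ≠ ∞)
    (h : X ≤ w ^ (1 / 2 : ℝ) * (C * X) ^ (1 / 2 : ℝ)) : X ≤ C * w := by
  rcases eq_or_ne X 0 with rfl | hX₀
  · exact zero_le
  have h_sq := ENNReal.rpow_le_rpow h zero_le_two
  rw [← ENNReal.mul_rpow_of_nonneg _ _ (by norm_num), ← ENNReal.rpow_mul, ENNReal.rpow_two, sq,
    one_div, inv_mul_cancel₀ two_ne_zero, ENNReal.rpow_one, ← mul_assoc, mul_comm w] at h_sq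
  exact (ENNReal.mul_le_mul_iff_left hX₀ hX).1 h_sq

lemma HasStrongType.adjoint_kernelOperator [SFinite μ] [SFinite ν]
    (hK : StronglyMeasurable (Function.uncurry K)) (hM : ∀ z y, ‖K z y‖ ≤ M)
    (hB : ∀ z, ∫⁻ y, ‖K z y‖ₑ ∂μ ≤ B) (hB_top : B ≠ ∞)
    (hC : HasStrongType (kernelOperator μ K) 2 μ ν C) :
    HasStrongType (kernelOperator ν fun y z => star (K z y)) 2 ν μ C := by
  intro W hWm hW
  set S := kernelOperator ν (fun y z => star (K z y)) W
  have hK' : StronglyMeasurable (Function.uncurry fun y z => star (K z y)) :=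
    continuous_star.comp_stronglyMeasurable (hK.comp_measurable measurable_swap)
  have hSm : StronglyMeasurable S := stronglyMeasurable_kernelOperator hK' hWm
  have hS : Integrable S μ :=
    integrable_kernelOperator hK'
      (by simpa only [RCLike.star_def, RCLike.enorm_conj] using hB) hB_top hWm hW
  have hS_sq : Integrable (fun y => ‖S y‖ ^ 2) μ :=
    integrable_norm_sq_of_bounded
      (norm_kernelOperator_le (fun y z => (norm_star _).trans_le (hM z y)) hW) hS
  have hS_eq := lintegral_enorm_sq_eq_enorm_integral hS_sq
  refine le_mul_of_le_rpow_half_mul_rpow_half (hS_eq ▸ enorm_ne_top) ?_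
  calc ∫⁻ y, ‖S y‖ₑ ^ (2 : ℝ) ∂μ
      = ‖∫ z, star (W z) * kernelOperator μ K S z ∂ν‖ₑ := by
        rw [hS_eq, integral_star_mul_kernelOperator hK hM hS hW]
    _ ≤ ∫⁻ z, ‖W z‖ₑ * ‖kernelOperator μ K S z‖ₑ ∂ν := by
        refine (enorm_integral_le_lintegral_enorm _).trans_eq ?_
        simp only [enorm_mul, RCLike.star_def, RCLike.enorm_conj]
    _ ≤ (∫⁻ z, ‖W z‖ₑ ^ (2 : ℝ) ∂ν) ^ (1 / 2 : ℝ) *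
          (∫⁻ z, ‖kernelOperator μ K S z‖ₑ ^ (2 : ℝ) ∂ν) ^ (1 / 2 : ℝ) :=
        ENNReal.lintegral_mul_le_Lp_mul_Lq _ .two_two hWm.enorm.aemeasurable
          (stronglyMeasurable_kernelOperator hK hSm).enorm.aemeasurable
    _ ≤ (∫⁻ z, ‖W z‖ₑ ^ (2 : ℝ) ∂ν) ^ (1 / 2 : ℝ) *
          (C * ∫⁻ y, ‖S y‖ₑ ^ (2 : ℝ) ∂μ) ^ (1 / 2 : ℝ) := by
        gcongr
        exact hC hSm hS

end KernelOperator

section RealEstimates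

lemma exp_neg_mul_le_rpow_neg {N β r : ℝ} (hN : 0 ≤ N) (hβ : 0 < β) (hr : 0 ≤ r) :
    Real.exp (-(β * r)) ≤ (N / β) ^ N * Real.exp β * (1 + r) ^ (-N) := by
  rcases hN.eq_or_lt with rfl | hN
  · have : -(β * r) ≤ β := by nlinarith
    simpa using this
  have h_base : 1 + r ≤ N / β * Real.exp (β * (1 + r) / N) := by
    calc 1 + r = N / β * (β * (1 + r) / N) := by field_simp
      _ ≤ N / β * Real.exp (β * (1 + r) / N) := by
        gcongr
        linarith [Real.add_one_le_exp (β * (1 + r) / N)]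
  have h_pow : (1 + r) ^ N ≤ (N / β) ^ N * Real.exp β * Real.exp (β * r) := by
    refine (Real.rpow_le_rpow (by positivity) h_base hN.le).trans_eq ?_
    rw [Real.mul_rpow (by positivity) (by positivity), ← Real.exp_mul, mul_assoc, ← Real.exp_add]
    congr 2
    field_simp
  rw [Real.rpow_neg (by positivity), Real.exp_neg, ← div_eq_mul_inv, le_div_iff₀ (by positivity),
    inv_mul_le_iff₀ (Real.exp_pos _), mul_comm (Real.exp _)]
  exact h_pow

lemma add_mul_rpow_neg_le {b β r σ : ℝ} (hb : 0 < b) (hβ : 0 < β) (hr : 0 ≤ r) (hσ : 0 ≤ σ) :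
    (b + β * r) ^ (-σ) ≤ min b β ^ (-σ) * (1 + r) ^ (-σ) := by
  have hm : 0 < min b β := lt_min hb hβ
  rw [← Real.mul_rpow hm.le (by positivity), mul_add, mul_one]
  exact Real.rpow_le_rpow_of_nonpos (by positivity)
    (add_le_add (min_le_left _ _) (mul_le_mul_of_nonneg_right (min_le_right _ _) hr))
    (neg_nonpos.2 hσ)

lemma neg_sq_div_le_sub {b : ℝ} (hb : 0 < b) (s : ℝ) : -s ^ 2 / (4 * b) ≤ b / 2 - s / 2 := by
  rw [div_le_iff₀ (by positivity)]
  nlinarith [sq_nonneg (s - b), sq_nonneg b]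

lemma exp_neg_mul_div_add_le {a t r : ℝ} (ha : 0 < a) (ht : 0 < t) (hr : 0 ≤ r) :
    Real.exp (-(a * t / (t + a) * r)) ≤
      Real.exp (-(a / (1 + a) * r * t)) + Real.exp (-(a / (1 + a) * r)) := by
  rcases le_total t 1 with h1 | h1
  · refine le_add_of_le_of_nonneg (Real.exp_le_exp.2 (neg_le_neg ?_)) (Real.exp_pos _).le
    have : a / (1 + a) * t ≤ a * t / (t + a) := by
      rw [div_mul_eq_mul_div]
      gcongr
    nlinarith
  · refine le_add_of_nonneg_of_le (Real.exp_pos _).le ?_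
    refine Real.exp_le_exp.2 (neg_le_neg (mul_le_mul_of_nonneg_right ?_ hr))
    rw [div_le_div_iff₀ (by positivity) (by positivity)]
    nlinarith [mul_nonneg (sq_nonneg a) (sub_nonneg.2 h1)]

lemma integrableOn_rpow_mul_exp_neg_mul {σ c : ℝ} (hσ : 0 < σ) (hc : 0 < c) :
    IntegrableOn (fun t : ℝ => t ^ (σ - 1) * Real.exp (-(c * t))) (Set.Ioi 0) := by
  simpa using integrableOn_rpow_mul_exp_neg_mul_rpow (s := σ - 1) (p := 1) (b := c)
    (by linarith) one_pos hc

lemma Gamma_mul_rpow_neg_eq {σ c : ℝ} (hσ : 0 < σ) (hc : 0 < c) :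
    Real.Gamma σ * c ^ (-σ) = ∫ t in Set.Ioi (0 : ℝ), t ^ (σ - 1) * Real.exp (-(c * t)) := by
  rw [Real.integral_rpow_mul_exp_neg_mul_Ioi hσ hc, one_div, Real.inv_rpow hc.le,
    Real.rpow_neg hc.le, mul_comm]

end RealEstimates

section GaussianPacket

variable {V : Type*} [NormedAddCommGroup V] [InnerProductSpace ℝ V]

/-- The modulated Gaussian `η ↦ exp(-a|η-ζ|² + i w·η)`, a wave packet on the Fourier side:
`ζ` is its centre and `w` its frequency. -/
def gaussianPacket (a : ℝ) (ζ w η : V) : ℂ :=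
  Complex.exp ((-(a * ‖η - ζ‖ ^ 2) : ℝ) + Complex.I * (⟪w, η⟫ : ℂ))

lemma continuous_gaussianPacket (a : ℝ) (ζ w : V) : Continuous (gaussianPacket a ζ w) := by
  unfold gaussianPacket
  fun_prop

lemma norm_gaussianPacket (a : ℝ) (ζ w η : V) :
    ‖gaussianPacket a ζ w η‖ = Real.exp (-(a * ‖η - ζ‖ ^ 2)) := by
  rw [gaussianPacket, Complex.norm_exp, Complex.add_re, Complex.ofReal_re, Complex.I_mul_re,
    Complex.ofReal_im, neg_zero, add_zero]

lemma exp_neg_inner_mul_gaussianPacket (a : ℝ) (ζ w y η : V) :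
    Complex.exp (-Complex.I * (⟪η, y⟫ : ℂ)) * gaussianPacket a ζ w η =
      gaussianPacket a ζ (w - y) η := by
  rw [gaussianPacket, gaussianPacket, ← Complex.exp_add, inner_sub_left, real_inner_comm]
  congr 1
  push_cast
  ring

lemma mul_norm_sq_add_mul_norm_sub_sq {t a : ℝ} (h : t + a ≠ 0) (ζ η : V) :
    t * ‖η + (a / (t + a)) • ζ‖ ^ 2 + a * ‖η + (a / (t + a)) • ζ - ζ‖ ^ 2 =
      (t + a) * ‖η‖ ^ 2 + a * t / (t + a) * ‖ζ‖ ^ 2 := by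
  have h_sub : η + (a / (t + a)) • ζ - ζ = η + (-t / (t + a)) • ζ := by
    rw [show -t / (t + a) = a / (t + a) - 1 by field_simp; ring, sub_smul, one_smul, add_sub_assoc]
  rw [h_sub]
  simp only [norm_add_sq_real, real_inner_smul_right, norm_smul, mul_pow, Real.norm_eq_abs, sq_abs]
  field_simp
  ring

lemma exp_neg_mul_gaussianPacket_add {t a : ℝ} (h : t + a ≠ 0) (ζ w η : V) :
    (Real.exp (-(t * ‖η + (a / (t + a)) • ζ‖ ^ 2)) : ℂ) *
        gaussianPacket a ζ w (η + (a / (t + a)) • ζ) =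
      Complex.exp ((-(a * t / (t + a) * ‖ζ‖ ^ 2) : ℝ) +
          Complex.I * (⟪w, (a / (t + a)) • ζ⟫ : ℂ)) *
        Complex.exp (-((t + a : ℝ) : ℂ) * ‖η‖ ^ 2 + Complex.I * (⟪w, η⟫ : ℂ)) := by
  rw [gaussianPacket, Complex.ofReal_exp, ← Complex.exp_add, ← Complex.exp_add, inner_add_right]
  congr 1
  have h_square := congrArg Complex.ofReal (mul_norm_sq_add_mul_norm_sub_sq h ζ η)
  push_cast at h_square ⊢
  linear_combination -h_square

variable [FiniteDimensional ℝ V] [MeasurableSpace V] [BorelSpace V]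

lemma integral_exp_neg_mul_gaussianPacket {t a : ℝ} (h : 0 < t + a) (ζ w : V) :
    ∫ η : V, (Real.exp (-(t * ‖η‖ ^ 2)) : ℂ) * gaussianPacket a ζ w η =
      Complex.exp ((-(a * t / (t + a) * ‖ζ‖ ^ 2) : ℝ) +
          Complex.I * (⟪w, (a / (t + a)) • ζ⟫ : ℂ)) *
        (((π / (t + a) : ℝ) : ℂ) ^ ((Module.finrank ℝ V : ℂ) / 2) *
          Real.exp (-‖w‖ ^ 2 / (4 * (t + a)))) := by
  rw [← integral_add_right_eq_self _ ((a / (t + a)) • ζ)]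
  simp_rw [exp_neg_mul_gaussianPacket_add h.ne']
  rw [integral_const_mul,
    GaussianFourier.integral_cexp_neg_mul_sq_norm_add (by simpa using h), Complex.I_sq]
  push_cast
  ring_nf

lemma norm_integral_exp_neg_mul_gaussianPacket {t a : ℝ} (h : 0 < t + a) (ζ w : V) :
    ‖∫ η : V, (Real.exp (-(t * ‖η‖ ^ 2)) : ℂ) * gaussianPacket a ζ w η‖ =
      Real.exp (-(a * t / (t + a) * ‖ζ‖ ^ 2)) *
        ((π / (t + a)) ^ ((Module.finrank ℝ V : ℝ) / 2) *
          Real.exp (-‖w‖ ^ 2 / (4 * (t + a)))) := by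
  rw [integral_exp_neg_mul_gaussianPacket h, norm_mul, norm_mul, Complex.norm_exp,
    Complex.norm_cpow_eq_rpow_re_of_pos (by positivity), Complex.norm_real,
    Real.norm_of_nonneg (Real.exp_pos _).le, Complex.add_re, Complex.ofReal_re, Complex.I_mul_re,
    Complex.ofReal_im, neg_zero, add_zero]
  simp

lemma integrable_exp_neg_mul_norm_sub_sq {a : ℝ} (ha : 0 < a) (ζ : V) :
    Integrable fun η : V => Real.exp (-(a * ‖η - ζ‖ ^ 2)) := by
  have h := ((GaussianFourier.integrable_cexp_neg_mul_sq_norm_add (b := (a : ℂ))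
    (by simpa using ha) 0 (0 : V)).comp_sub_right ζ).norm
  refine h.congr (.of_forall fun η => ?_)
  simp [Complex.norm_exp, ← Complex.ofReal_pow]

lemma integrable_gaussianPacket {a : ℝ} (ha : 0 < a) (ζ w : V) :
    Integrable (gaussianPacket a ζ w) :=
  (integrable_exp_neg_mul_norm_sub_sq ha ζ).mono'
    (continuous_gaussianPacket a ζ w).aestronglyMeasurable
    (.of_forall fun η => (norm_gaussianPacket a ζ w η).le)

lemma integrable_exp_neg_mul_norm {c : ℝ} (hc : 0 < c) :
    Integrable fun x : V => Real.exp (-(c * ‖x‖)) := by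
  refine ((integrable_one_add_norm (E := V) (μ := volume) (lt_add_one _)).const_mul
    (((Module.finrank ℝ V + 1) / c) ^ ((Module.finrank ℝ V : ℝ) + 1) * Real.exp c)).mono'
    (by fun_prop) (.of_forall fun x => ?_)
  rw [Real.norm_of_nonneg (Real.exp_pos _).le]
  exact exp_neg_mul_le_rpow_neg (by positivity) hc (norm_nonneg x)

end GaussianPacket

section Subordination

variable {V : Type*} [NormedAddCommGroup V] [InnerProductSpace ℝ V] [FiniteDimensional ℝ V]
  [MeasurableSpace V] [BorelSpace V]

lemma integrable_prod_rpow_mul_exp_neg_mul {σ : ℝ} (hσ : 0 < σ) {G : V → ℂ} (hG : Integrable G) :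
    Integrable (fun q : V × ℝ =>
        ((q.2 ^ (σ - 1) * Real.exp (-((1 + ‖q.1‖ ^ 2) * q.2)) : ℝ) : ℂ) * G q.1)
      (volume.prod (volume.restrict (Set.Ioi 0))) := by
  refine (hG.norm.mul_prod (integrableOn_rpow_mul_exp_neg_mul hσ one_pos)).mono'
    ((Measurable.aestronglyMeasurable (by fun_prop)).mul hG.1.comp_fst) ?_
  have h_pos : ∀ᵐ q : V × ℝ ∂(volume.prod (volume.restrict (Set.Ioi 0))), 0 < q.2 :=
    Measure.quasiMeasurePreserving_snd.ae (ae_restrict_mem measurableSet_Ioi)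
  filter_upwards [h_pos] with q hq
  rw [norm_mul, Complex.norm_real, Real.norm_of_nonneg (by positivity), mul_comm]
  gcongr
  exact le_add_of_nonneg_right (sq_nonneg _)

lemma Gamma_mul_integral_one_add_norm_sq_rpow_neg_mul {σ : ℝ} (hσ : 0 < σ) {G : V → ℂ}
    (hG : Integrable G) :
    Real.Gamma σ * ∫ η, (((1 + ‖η‖ ^ 2) ^ (-σ) : ℝ) : ℂ) * G η =
      ∫ t in Set.Ioi (0 : ℝ), ((t ^ (σ - 1) * Real.exp (-t) : ℝ) : ℂ) *
        ∫ η, (Real.exp (-(t * ‖η‖ ^ 2)) : ℂ) * G η := by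
  calc Real.Gamma σ * ∫ η, (((1 + ‖η‖ ^ 2) ^ (-σ) : ℝ) : ℂ) * G η
      = ∫ η, ∫ t in Set.Ioi (0 : ℝ),
          ((t ^ (σ - 1) * Real.exp (-((1 + ‖η‖ ^ 2) * t)) : ℝ) : ℂ) * G η := by
        rw [← integral_const_mul]
        congr 1 with η
        rw [integral_mul_const, integral_complex_ofReal, ← Gamma_mul_rpow_neg_eq hσ (by positivity),
          Complex.ofReal_mul, mul_assoc]
    _ = ∫ t in Set.Ioi (0 : ℝ), ∫ η,
          ((t ^ (σ - 1) * Real.exp (-((1 + ‖η‖ ^ 2) * t)) : ℝ) : ℂ) * G η :=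
        integral_integral_swap (f := fun (η : V) (t : ℝ) =>
          ((t ^ (σ - 1) * Real.exp (-((1 + ‖η‖ ^ 2) * t)) : ℝ) : ℂ) * G η)
          (integrable_prod_rpow_mul_exp_neg_mul hσ hG)
    _ = _ := by
        congr 1 with t
        rw [← integral_const_mul]
        congr 1 with η
        rw [show -((1 + ‖η‖ ^ 2) * t) = -t + -(t * ‖η‖ ^ 2) by ring, Real.exp_add]
        push_cast
        ring

lemma norm_integral_exp_neg_mul_gaussianPacket_le {t a : ℝ} (ht : 0 < t) (ha : 0 < a) (ζ w : V) :
    ‖∫ η : V, (Real.exp (-(t * ‖η‖ ^ 2)) : ℂ) * gaussianPacket a ζ w η‖ ≤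
      (π / a) ^ ((Module.finrank ℝ V : ℝ) / 2) * Real.exp (a / 2 - ‖w‖ / 2) * (Real.exp (t / 2) *
        (Real.exp (-(a / (1 + a) * ‖ζ‖ ^ 2 * t)) + Real.exp (-(a / (1 + a) * ‖ζ‖ ^ 2)))) := by
  have hb : 0 < t + a := by positivity
  have h_exp : Real.exp (-‖w‖ ^ 2 / (4 * (t + a))) ≤
      Real.exp (a / 2 - ‖w‖ / 2) * Real.exp (t / 2) := by
    rw [← Real.exp_add, Real.exp_le_exp]
    linarith [neg_sq_div_le_sub hb ‖w‖]
  rw [norm_integral_exp_neg_mul_gaussianPacket hb]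
  calc _ ≤ (Real.exp (-(a / (1 + a) * ‖ζ‖ ^ 2 * t)) + Real.exp (-(a / (1 + a) * ‖ζ‖ ^ 2))) *
        ((π / a) ^ ((Module.finrank ℝ V : ℝ) / 2) *
          (Real.exp (a / 2 - ‖w‖ / 2) * Real.exp (t / 2))) := by
        gcongr
        · exact exp_neg_mul_div_add_le ha ht (sq_nonneg _)
        · exact le_add_of_nonneg_left ht.le
    _ = _ := by ring

lemma exists_integral_rpow_mul_exp_le {σ β : ℝ} (hσ : 0 < σ) (hβ : 0 < β) :
    ∃ C : ℝ, 0 ≤ C ∧ ∀ r : ℝ, 0 ≤ r →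
      IntegrableOn (fun t => t ^ (σ - 1) * Real.exp (-t) *
        (Real.exp (t / 2) * (Real.exp (-(β * r * t)) + Real.exp (-(β * r))))) (Set.Ioi 0) ∧
      ∫ t in Set.Ioi (0 : ℝ), t ^ (σ - 1) * Real.exp (-t) *
          (Real.exp (t / 2) * (Real.exp (-(β * r * t)) + Real.exp (-(β * r)))) ≤
        C * (1 + r) ^ (-σ) := by
  have hΓ := Real.Gamma_pos_of_pos hσ
  refine ⟨Real.Gamma σ * (min (1 / 2) β ^ (-σ) + (σ / β) ^ σ * Real.exp β * (1 / 2) ^ (-σ)),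
    mul_nonneg hΓ.le (by positivity), fun r hr => ?_⟩
  have h_split (t : ℝ) : t ^ (σ - 1) * Real.exp (-t) *
        (Real.exp (t / 2) * (Real.exp (-(β * r * t)) + Real.exp (-(β * r)))) =
      t ^ (σ - 1) * Real.exp (-((1 / 2 + β * r) * t)) +
        Real.exp (-(β * r)) * (t ^ (σ - 1) * Real.exp (-(1 / 2 * t))) := by
    rw [show -((1 / 2 + β * r) * t) = -t + (t / 2 + -(β * r * t)) by ring,
      show -(1 / 2 * t) = -t + t / 2 by ring]
    simp only [Real.exp_add]
    ring
  simp only [h_split]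
  have h_int₁ := integrableOn_rpow_mul_exp_neg_mul hσ (c := 1 / 2 + β * r) (by positivity)
  have h_int₂ := (integrableOn_rpow_mul_exp_neg_mul hσ one_half_pos).const_mul
    (Real.exp (-(β * r)))
  refine ⟨h_int₁.add h_int₂, ?_⟩
  rw [integral_add h_int₁ h_int₂, integral_const_mul,
    ← Gamma_mul_rpow_neg_eq hσ (by positivity), ← Gamma_mul_rpow_neg_eq hσ one_half_pos]
  calc _ ≤ Real.Gamma σ * (min (1 / 2) β ^ (-σ) * (1 + r) ^ (-σ)) +
        (σ / β) ^ σ * Real.exp β * (1 + r) ^ (-σ) * (Real.Gamma σ * (1 / 2) ^ (-σ)) := by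
        gcongr
        · exact add_mul_rpow_neg_le one_half_pos hβ hr hσ.le
        · exact exp_neg_mul_le_rpow_neg hσ.le hβ hr
    _ = _ := by ring

-- Subordinating the Bessel symbol to Gaussians makes every Fourier integral explicit.
lemma exists_norm_integral_bessel_mul_gaussianPacket_le {σ a : ℝ} (hσ : 0 < σ) (ha : 0 < a) :
    ∃ C : ℝ, 0 ≤ C ∧ ∀ ζ w : V,
      ‖∫ η : V, (((1 + ‖η‖ ^ 2) ^ (-σ) : ℝ) : ℂ) * gaussianPacket a ζ w η‖ ≤
        C * (1 + ‖ζ‖ ^ 2) ^ (-σ) * Real.exp (-(‖w‖ / 2)) := by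
  have hΓ := Real.Gamma_pos_of_pos hσ
  obtain ⟨C, hC, h⟩ := exists_integral_rpow_mul_exp_le hσ (β := a / (1 + a)) (by positivity)
  refine ⟨(Real.Gamma σ)⁻¹ * ((π / a) ^ ((Module.finrank ℝ V : ℝ) / 2) * Real.exp (a / 2) * C),
    by positivity, fun ζ w => ?_⟩
  obtain ⟨h_int, h_le⟩ := h (‖ζ‖ ^ 2) (sq_nonneg _)
  set A : ℝ := (π / a) ^ ((Module.finrank ℝ V : ℝ) / 2) * Real.exp (a / 2 - ‖w‖ / 2)
  have h_norm : Real.Gamma σ *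
      ‖∫ η : V, (((1 + ‖η‖ ^ 2) ^ (-σ) : ℝ) : ℂ) * gaussianPacket a ζ w η‖ ≤
        A * (C * (1 + ‖ζ‖ ^ 2) ^ (-σ)) := by
    rw [← Real.norm_of_nonneg hΓ.le, ← Complex.norm_real, ← norm_mul,
      Gamma_mul_integral_one_add_norm_sq_rpow_neg_mul hσ (integrable_gaussianPacket ha ζ w)]
    refine (norm_integral_le_of_norm_le (h_int.const_mul A) ?_).trans ?_
    · filter_upwards [ae_restrict_mem measurableSet_Ioi] with t (ht : 0 < t)
      rw [norm_mul, Complex.norm_real, Real.norm_of_nonneg (by positivity), mul_left_comm]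
      gcongr
      exact norm_integral_exp_neg_mul_gaussianPacket_le ht ha ζ w
    · rw [integral_const_mul]
      gcongr
  rw [← le_inv_mul_iff₀ hΓ] at h_norm
  refine h_norm.trans_eq ?_
  rw [show A = _ * (Real.exp (a / 2) * Real.exp (-(‖w‖ / 2))) by
    rw [← Real.exp_add, ← sub_eq_add_neg]]
  ring

end Subordination

section BesselPacket

variable {d : ℕ} {k : ℝ}

/-- The Fourier-side wave packet centred at `z = (x, ξ)`, multiplied by the quotient
`(1+|ξ|²)^{k/2} (1+|η|²)^{-k/2}` of Bessel symbols at its centre and at `η`. -/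
def besselPacket (d : ℕ) (k : ℝ) (z : P d) (η : E d) : ℂ :=
  (((1 + ‖z.2‖ ^ 2) ^ (k / 2) * (1 + ‖η‖ ^ 2) ^ (-(k / 2)) : ℝ) : ℂ) *
    (Complex.exp (-Complex.I * (⟪z.1, z.2⟫ : ℂ)) * gaussianPacket (1 / 2) z.2 z.1 η)

lemma continuous_besselPacket (k : ℝ) (z : P d) : Continuous (besselPacket d k z) := by
  have h_pow : Continuous fun η : E d => (1 + ‖η‖ ^ 2) ^ (-(k / 2)) :=
    Continuous.rpow_const (by fun_prop) fun η => Or.inl (by positivity)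
  have := continuous_gaussianPacket (1 / 2) z.2 z.1
  unfold besselPacket
  fun_prop

lemma measurable_besselPacket (k : ℝ) : Measurable (Function.uncurry (besselPacket d k)) := by
  unfold Function.uncurry besselPacket gaussianPacket
  fun_prop

lemma besselPacket_eq_exp_mul (k : ℝ) (z : P d) (η : E d) :
    besselPacket d k z η = Complex.exp (-Complex.I * (⟪z.1, z.2⟫ : ℂ)) *
      (Complex.exp (-Complex.I * (⟪η, -z.1⟫ : ℂ)) * besselPacket d k (0, z.2) η) := by
  have h := exp_neg_inner_mul_gaussianPacket (1 / 2) z.2 0 (-z.1) η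
  rw [sub_neg_eq_add, zero_add] at h
  simp only [besselPacket, ← h, inner_zero_left, Complex.ofReal_zero, mul_zero, Complex.exp_zero]
  ring

lemma norm_besselPacket (k : ℝ) (z : P d) (η : E d) :
    ‖besselPacket d k z η‖ = (1 + ‖z.2‖ ^ 2) ^ (k / 2) * (1 + ‖η‖ ^ 2) ^ (-(k / 2)) *
      Real.exp (-(1 / 2 * ‖η - z.2‖ ^ 2)) := by
  rw [besselPacket, norm_mul, norm_mul, norm_gaussianPacket, Complex.norm_real,
    Real.norm_of_nonneg (by positivity), Complex.norm_exp]
  simp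

lemma one_add_norm_add_sq_le {G : Type*} [SeminormedAddCommGroup G] (a b : G) :
    1 + ‖a + b‖ ^ 2 ≤ 2 * ((1 + ‖a‖ ^ 2) * (1 + ‖b‖ ^ 2)) := by
  have h := pow_le_pow_left₀ (norm_nonneg _) (norm_add_le a b) 2
  nlinarith [sq_nonneg (‖a‖ - ‖b‖), mul_nonneg (sq_nonneg ‖a‖) (sq_nonneg ‖b‖)]

lemma rpow_mul_rpow_neg_le {G : Type*} [SeminormedAddCommGroup G] (hk : 0 ≤ k) (ξ η : G) :
    (1 + ‖ξ‖ ^ 2) ^ (k / 2) * (1 + ‖η‖ ^ 2) ^ (-(k / 2)) ≤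
      2 ^ (k / 2) * (1 + ‖η - ξ‖ ^ 2) ^ (k / 2) := by
  have h_peetre := one_add_norm_add_sq_le η (ξ - η)
  rw [add_sub_cancel, norm_sub_rev] at h_peetre
  rw [Real.rpow_neg (by positivity), ← div_eq_mul_inv, div_le_iff₀ (by positivity),
    ← Real.mul_rpow (by norm_num) (by positivity), ← Real.mul_rpow (by positivity) (by positivity)]
  exact Real.rpow_le_rpow (by positivity) (h_peetre.trans_eq (by ring)) (by positivity)

lemma exists_norm_besselPacket_le (hk : 0 ≤ k) :
    ∃ C : ℝ, 0 ≤ C ∧ ∀ (z : P d) (η : E d),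
      ‖besselPacket d k z η‖ ≤ C * Real.exp (-(1 / 4 * ‖η - z.2‖ ^ 2)) := by
  refine ⟨2 ^ (k / 2) * ((k / 2 / (1 / 4)) ^ (k / 2) * Real.exp (1 / 4)), by positivity,
    fun z η => ?_⟩
  set r : ℝ := ‖η - z.2‖ ^ 2
  have h_decay := exp_neg_mul_le_rpow_neg (N := k / 2) (β := 1 / 4) (by positivity) (by norm_num)
    (sq_nonneg ‖η - z.2‖)
  rw [Real.rpow_neg (by positivity), ← div_eq_mul_inv, le_div_iff₀ (by positivity)] at h_decay
  rw [norm_besselPacket, show -(1 / 2 * r) = -(1 / 4 * r) + -(1 / 4 * r) by ring, Real.exp_add]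
  calc _ ≤ 2 ^ (k / 2) * (1 + r) ^ (k / 2) *
        (Real.exp (-(1 / 4 * r)) * Real.exp (-(1 / 4 * r))) := by
        exact mul_le_mul_of_nonneg_right (rpow_mul_rpow_neg_le hk z.2 η) (by positivity)
    _ = 2 ^ (k / 2) * (Real.exp (-(1 / 4 * r)) * (1 + r) ^ (k / 2)) * Real.exp (-(1 / 4 * r)) := by
        ring
    _ ≤ _ := by gcongr

lemma integrable_besselPacket (hk : 0 ≤ k) (z : P d) : Integrable (besselPacket d k z) := by
  obtain ⟨C, -, hC⟩ := exists_norm_besselPacket_le (d := d) hk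
  exact ((integrable_exp_neg_mul_norm_sub_sq (by norm_num) z.2).const_mul C).mono'
    (continuous_besselPacket k z).aestronglyMeasurable (.of_forall (hC z))

lemma exists_lintegral_enorm_besselPacket_sq_le (hk : 0 ≤ k) :
    ∃ B : ℝ≥0∞, B ≠ ∞ ∧ ∀ x η : E d, ∫⁻ ξ, ‖besselPacket d k (x, ξ) η‖ₑ ^ (2 : ℝ) ≤ B := by
  obtain ⟨C, -, hC⟩ := exists_norm_besselPacket_le (d := d) hk
  have h_int := (integrable_exp_neg_mul_norm_sub_sq (a := 1 / 2) (by norm_num)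
    (0 : E d)).const_mul (C ^ 2)
  refine ⟨_, h_int.lintegral_lt_top.ne, fun x η => ?_⟩
  rw [← lintegral_sub_left_eq_self (μ := (volume : Measure (E d))) _ η]
  refine lintegral_mono fun ξ => ?_
  rw [← ofReal_norm_rpow zero_le_two, Real.rpow_two]
  refine ENNReal.ofReal_le_ofReal ((pow_le_pow_left₀ (norm_nonneg _) (hC _ η) 2).trans_eq ?_)
  rw [mul_pow, ← Real.exp_nat_mul, sub_zero, sub_sub_cancel]
  push_cast
  ring_nf

end BesselPacket

section BesselKernel

variable {d : ℕ} {k : ℝ}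

/-- The integral kernel of the operator that maps `(1-Δ)^{k/2} f` to `(1+|ξ|²)^{k/2} V_g f(x, ξ)`,
up to the constant `(2π)^{d/2}`. -/
def besselKernel (d : ℕ) (k : ℝ) (z : P d) (y : E d) : ℂ := FT d (besselPacket d k z) y

lemma besselKernel_eq (k : ℝ) (z : P d) (y : E d) :
    besselKernel d k z y = (((1 + ‖z.2‖ ^ 2) ^ (k / 2) : ℝ) : ℂ) *
      Complex.exp (-Complex.I * (⟪z.1, z.2⟫ : ℂ)) *
      ∫ η : E d, (((1 + ‖η‖ ^ 2) ^ (-(k / 2)) : ℝ) : ℂ) *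
        gaussianPacket (1 / 2) z.2 (z.1 - y) η := by
  rw [← integral_const_mul, besselKernel, FT]
  congr 1 with η
  rw [besselPacket, ← exp_neg_inner_mul_gaussianPacket]
  push_cast
  ring

lemma stronglyMeasurable_besselKernel (k : ℝ) :
    StronglyMeasurable (Function.uncurry (besselKernel d k)) := by
  refine StronglyMeasurable.integral_prod_right' (f := fun q : (P d × E d) × E d =>
    Complex.exp (-Complex.I * (⟪q.2, q.1.2⟫ : ℂ)) * besselPacket d k q.1.1 q.2) ?_
  have h_packet := (measurable_besselPacket (d := d) k).comp (g := Function.uncurry _)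
    (f := fun q : (P d × E d) × E d => (q.1.1, q.2)) (by fun_prop)
  exact Measurable.stronglyMeasurable (Measurable.mul (by fun_prop) h_packet)

lemma besselKernel_zero (z : P d) (y : E d) :
    besselKernel d 0 z y = (((2 * π) ^ ((d : ℝ) / 2) : ℝ) : ℂ) * pkbar d z y := by
  have h := integral_exp_neg_mul_gaussianPacket (t := 0) (a := 1 / 2) (by norm_num) z.2 (z.1 - y)
  have h_const : ((π / (0 + 1 / 2) : ℝ) : ℂ) ^ ((d : ℂ) / 2) =
      (((2 * π) ^ ((d : ℝ) / 2) : ℝ) : ℂ) := by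
    rw [show π / (0 + 1 / 2) = 2 * π by ring, Complex.ofReal_cpow (by positivity)]
    push_cast
    rfl
  rw [finrank_euclideanSpace_fin, h_const] at h
  simp only [zero_mul, neg_zero, Real.exp_zero, Complex.ofReal_one, one_mul] at h
  rw [besselKernel_eq]
  simp only [zero_div, neg_zero, Real.rpow_zero, Complex.ofReal_one, one_mul]
  rw [h, pkbar, ← mul_assoc, ← Complex.exp_add, mul_left_comm, norm_sub_rev, inner_smul_right,
    inner_sub_left]
  congr 2
  · congr 1
    push_cast
    ring
  · norm_num

lemma exists_norm_besselKernel_le (hk : 0 ≤ k) :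
    ∃ C : ℝ, 0 ≤ C ∧ ∀ (z : P d) y,
      ‖besselKernel d k z y‖ ≤ C * Real.exp (-(1 / 2 * ‖y - z.1‖)) := by
  rcases hk.eq_or_lt with rfl | hk
  · refine ⟨(2 * π) ^ ((d : ℝ) / 2) * Real.exp (1 / 4), by positivity, fun z y => ?_⟩
    rw [besselKernel_zero, pkbar, norm_mul, norm_mul, Complex.norm_real,
      Complex.norm_real, Real.norm_of_nonneg (by positivity),
      Real.norm_of_nonneg (by positivity), mul_assoc, ← Real.exp_add]
    have h := neg_sq_div_le_sub one_half_pos ‖y - z.1‖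
    have h_phase : ‖Complex.exp (-Complex.I * (⟪y, z.2⟫ : ℂ))‖ = 1 := by simp [Complex.norm_exp]
    rw [h_phase, one_mul]
    gcongr
    linarith
  · obtain ⟨C, hC, h⟩ := exists_norm_integral_bessel_mul_gaussianPacket_le (V := E d)
      (half_pos hk) one_half_pos
    refine ⟨C, hC, fun z y => ?_⟩
    have h_phase : ‖Complex.exp (-Complex.I * (⟪z.1, z.2⟫ : ℂ))‖ = 1 := by simp [Complex.norm_exp]
    rw [besselKernel_eq, norm_mul, norm_mul, h_phase, Complex.norm_real,
      Real.norm_of_nonneg (by positivity), mul_one]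
    calc _ ≤ (1 + ‖z.2‖ ^ 2) ^ (k / 2) *
          (C * (1 + ‖z.2‖ ^ 2) ^ (-(k / 2)) * Real.exp (-(‖z.1 - y‖ / 2))) := by
          gcongr
          exact h z.2 (z.1 - y)
      _ = _ := by
          rw [Real.rpow_neg (by positivity), norm_sub_rev, div_eq_inv_mul _ (2 : ℝ), one_div]
          field_simp

lemma exists_norm_besselKernel_le_const (hk : 0 ≤ k) :
    ∃ M : ℝ, ∀ (z : P d) y, ‖besselKernel d k z y‖ ≤ M := by
  obtain ⟨C, hC, h⟩ := exists_norm_besselKernel_le (d := d) hk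
  refine ⟨C, fun z y => (h z y).trans (mul_le_of_le_one_right hC (Real.exp_le_one_iff.2 ?_))⟩
  linarith [norm_nonneg (y - z.1)]

lemma exists_lintegral_besselKernel_le (hk : 0 ≤ k) :
    ∃ B : ℝ≥0∞, B ≠ ∞ ∧ ∀ z : P d, ∫⁻ y, ‖besselKernel d k z y‖ₑ ≤ B := by
  obtain ⟨C, -, h⟩ := exists_norm_besselKernel_le (d := d) hk
  have h_int := (integrable_exp_neg_mul_norm (V := E d) one_half_pos).const_mul C
  refine ⟨_, h_int.lintegral_lt_top.ne, fun z => ?_⟩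
  rw [← lintegral_sub_right_eq_self (μ := (volume : Measure (E d)))
    (fun y => ENNReal.ofReal (C * Real.exp (-(1 / 2 * ‖y‖)))) z.1]
  refine lintegral_mono fun y => ?_
  rw [← ofReal_norm]
  exact ENNReal.ofReal_le_ofReal (h z y)

lemma exists_enorm_kernelOperator_besselKernel_le (hk : 0 ≤ k) :
    ∃ B : ℝ≥0∞, B ≠ ∞ ∧ ∀ F : E d → ℂ, Measurable F →
      ∃ a : E d → ℝ≥0∞, Measurable a ∧ ∫⁻ x, a x = B * ∫⁻ y, ‖F y‖ₑ ∧
        ∀ z, ‖kernelOperator volume (besselKernel d k) F z‖ₑ ≤ a z.1 := by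
  obtain ⟨C, -, h⟩ := exists_norm_besselKernel_le (d := d) hk
  have h_int := (integrable_exp_neg_mul_norm (V := E d) one_half_pos).const_mul C
  refine ⟨_, h_int.lintegral_lt_top.ne, fun F hF => ⟨fun x =>
    ∫⁻ y, ENNReal.ofReal (C * Real.exp (-(1 / 2 * ‖y - x‖))) * ‖F y‖ₑ, ?_, ?_, fun z => ?_⟩⟩
  · exact Measurable.lintegral_prod_right' (f := fun q : E d × E d =>
      ENNReal.ofReal (C * Real.exp (-(1 / 2 * ‖q.2 - q.1‖))) * ‖F q.2‖ₑ) (by fun_prop)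
  · rw [lintegral_lintegral_swap (Measurable.aemeasurable (by fun_prop)),
      ← lintegral_const_mul _ hF.enorm]
    congr 1 with y
    rw [lintegral_mul_const' _ _ enorm_ne_top,
      lintegral_sub_left_eq_self (μ := (volume : Measure (E d)))
        (fun x => ENNReal.ofReal (C * Real.exp (-(1 / 2 * ‖x‖)))) y]
  · refine (enorm_integral_le_lintegral_enorm _).trans (lintegral_mono fun y => ?_)
    rw [enorm_mul, ← ofReal_norm]
    gcongr
    exact h z y

lemma kernelOperator_besselKernel_eq (hk : 0 ≤ k) {F : E d → ℂ} (hF : Integrable F) (z : P d) :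
    kernelOperator volume (besselKernel d k) F z = ∫ η, besselPacket d k z η * FT d F η :=
  (integral_mul_FT_eq (integrable_besselPacket hk z) hF).symm ▸ rfl

lemma integrable_besselPacket_mul_FT (hk : 0 ≤ k) {F : E d → ℂ} (hF : Integrable F) (z : P d) :
    Integrable fun η => besselPacket d k z η * FT d F η :=
  (integrable_besselPacket hk z).mul_bdd (continuous_FT hF).aestronglyMeasurable
    (.of_forall (norm_FT_le F))

lemma enorm_kernelOperator_besselKernel_eq (hk : 0 ≤ k) {F : E d → ℂ} (hF : Integrable F)
    (z : P d) :
    ‖kernelOperator volume (besselKernel d k) F z‖ₑ =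
      ‖FT d (fun η => besselPacket d k (0, z.2) η * FT d F η) (-z.1)‖ₑ := by
  have h_phase : ‖Complex.exp (-Complex.I * (⟪z.1, z.2⟫ : ℂ))‖ₑ = 1 := by
    rw [← ofReal_norm, Complex.norm_exp]
    simp
  rw [kernelOperator_besselKernel_eq hk hF, ← one_mul ‖FT d _ _‖ₑ, ← h_phase, ← enorm_mul, FT,
    ← integral_const_mul]
  congr 2 with η
  rw [besselPacket_eq_exp_mul, mul_assoc, mul_assoc]

-- By Plancherel in `x` for frozen `ξ`, and once more for `F`.
lemma exists_hasStrongType_two_kernelOperator_besselKernel (hk : 0 ≤ k) :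
    ∃ C : ℝ≥0∞, C ≠ ∞ ∧
      HasStrongType (kernelOperator volume (besselKernel d k)) 2 volume volume C := by
  obtain ⟨B, hB, h⟩ := exists_lintegral_enorm_besselPacket_sq_le (d := d) hk
  set c := ENNReal.ofReal ((2 * π) ^ d)
  refine ⟨c * (B * c), by finiteness, fun F hFm hF => ?_⟩
  have h_meas : Measurable fun z : P d =>
      ‖kernelOperator volume (besselKernel d k) F z‖ₑ ^ (2 : ℝ) :=
    (stronglyMeasurable_kernelOperator (stronglyMeasurable_besselKernel k) hFm).enorm.pow_const _
  have h_packet : Measurable fun q : E d × E d =>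
      ‖besselPacket d k (0, q.1) q.2‖ₑ ^ (2 : ℝ) * ‖FT d F q.2‖ₑ ^ (2 : ℝ) :=
    (((measurable_besselPacket k).comp (f := fun q : E d × E d => (((0 : E d), q.1), q.2))
      (by fun_prop)).enorm.pow_const _).mul
      (((continuous_FT hF).measurable.comp measurable_snd).enorm.pow_const _)
  calc ∫⁻ z, ‖kernelOperator volume (besselKernel d k) F z‖ₑ ^ (2 : ℝ)
      = ∫⁻ ξ, ∫⁻ x, ‖FT d (fun η => besselPacket d k (0, ξ) η * FT d F η) x‖ₑ ^ (2 : ℝ) := by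
        rw [Measure.volume_eq_prod, lintegral_prod_symm _ h_meas.aemeasurable]
        congr 1 with ξ
        simp only [enorm_kernelOperator_besselKernel_eq hk hF]
        exact lintegral_neg_eq_self (μ := (volume : Measure (E d))) (fun x =>
          ‖FT d (fun η => besselPacket d k (0, ξ) η * FT d F η) x‖ₑ ^ (2 : ℝ))
    _ ≤ ∫⁻ ξ, c * ∫⁻ η, ‖besselPacket d k (0, ξ) η‖ₑ ^ (2 : ℝ) * ‖FT d F η‖ₑ ^ (2 : ℝ) := by
        gcongr with ξ
        simpa only [enorm_mul, ENNReal.mul_rpow_of_nonneg _ _ zero_le_two] using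
          lintegral_enorm_FT_sq_le (integrable_besselPacket_mul_FT hk hF (0, ξ))
    _ = c * ∫⁻ η, (∫⁻ ξ, ‖besselPacket d k (0, ξ) η‖ₑ ^ (2 : ℝ)) * ‖FT d F η‖ₑ ^ (2 : ℝ) := by
        rw [lintegral_const_mul _ h_packet.lintegral_prod_right',
          lintegral_lintegral_swap h_packet.aemeasurable]
        congr 2 with η
        exact lintegral_mul_const' _ _ (ENNReal.rpow_ne_top_of_nonneg zero_le_two
          (enorm_ne_top (x := FT d F η)))
    _ ≤ c * ∫⁻ η, B * ‖FT d F η‖ₑ ^ (2 : ℝ) := by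
        gcongr with η
        exact h 0 η
    _ ≤ c * (B * (c * ∫⁻ y, ‖F y‖ₑ ^ (2 : ℝ))) := by
        rw [lintegral_const_mul' _ _ hB]
        gcongr
        exact lintegral_enorm_FT_sq_le hF
    _ = _ := by ring

end BesselKernel

section BesselPotential

variable {d : ℕ} {k : ℝ}

lemma enorm_coe_of_nonneg {c : ℝ} (hc : 0 ≤ c) : ‖(c : ℂ)‖ₑ = ENNReal.ofReal c := by
  rw [← ofReal_norm, Complex.norm_of_nonneg hc]

open FourierTransform in
lemma exists_schwartzMap_FT_eq (k : ℝ) (f : SchwartzMap (E d) ℂ) :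
    ∃ F : SchwartzMap (E d) ℂ, ∀ ξ,
      FT d F ξ = (((1 + ‖ξ‖ ^ 2) ^ (k / 2) : ℝ) : ℂ) * FT d f ξ := by
  set m : E d → ℝ := fun η => (1 + ‖(2 * π) • η‖ ^ 2) ^ (k / 2)
  have h_growth : m.HasTemperateGrowth :=
    (Function.hasTemperateGrowth_one_add_norm_sq_rpow (E d) (k / 2)).comp
      (g := fun ξ : E d => (1 + ‖ξ‖ ^ 2) ^ (k / 2)) (f := fun η : E d => (2 * π) • η)
      (by fun_prop)
  refine ⟨𝓕⁻ (SchwartzMap.smulLeftCLM ℂ m (𝓕 f)), fun ξ => ?_⟩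
  have h_scale : (2 * π) • (2 * π)⁻¹ • ξ = ξ := smul_inv_smul₀ (by positivity) ξ
  rw [FT_eq_fourier, ← SchwartzMap.fourier_coe, FourierTransform.fourier_fourierInv_eq,
    SchwartzMap.smulLeftCLM_apply_apply h_growth, SchwartzMap.fourier_coe, FT_eq_fourier f,
    Complex.real_smul]
  simp only [m, h_scale]

open FourierTransform in
lemma integrable_FT (f : SchwartzMap (E d) ℂ) : Integrable (FT d f) := by
  rw [funext (FT_eq_fourier f), ← SchwartzMap.fourier_coe]
  exact (𝓕 f).integrable.comp_smul (by positivity)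

lemma exists_schwartzMap_eq_besselh (k : ℝ) (f : SchwartzMap (E d) ℂ) :
    ∃ F : SchwartzMap (E d) ℂ, ⇑F = besselh d 1 k f ∧
      ∀ ξ, FT d F ξ = (((1 + ‖ξ‖ ^ 2) ^ (k / 2) : ℝ) : ℂ) * FT d f ξ := by
  obtain ⟨F, hF⟩ := exists_schwartzMap_FT_eq k f
  refine ⟨F, funext fun x => ?_, hF⟩
  have h_inv := integral_exp_inner_mul_FT F.continuous F.integrable (integrable_FT F) x
  simp only [hF, ← mul_assoc] at h_inv
  simp only [besselh, one_mul, h_inv]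
  rw [inv_mul_cancel_left₀ (by simp [Real.pi_ne_zero])]

lemma kernelOperator_besselKernel_besselh (hk : 0 ≤ k) (f : SchwartzMap (E d) ℂ) (z : P d) :
    kernelOperator volume (besselKernel d k) (besselh d 1 k f) z =
      (((2 * π) ^ ((d : ℝ) / 2) * (1 + ‖z.2‖ ^ 2) ^ (k / 2) : ℝ) : ℂ) * stft d f z := by
  obtain ⟨F, hF, hFT⟩ := exists_schwartzMap_eq_besselh k f
  have h_stft : kernelOperator volume (besselKernel d 0) f z =
      (((2 * π) ^ ((d : ℝ) / 2) : ℝ) : ℂ) * stft d f z := by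
    rw [stft, kernelOperator, ← integral_const_mul]
    congr 1 with y
    rw [besselKernel_zero, mul_assoc, mul_comm (f y)]
  rw [← hF, kernelOperator_besselKernel_eq hk F.integrable, Complex.ofReal_mul,
    mul_comm (((2 * π) ^ ((d : ℝ) / 2) : ℝ) : ℂ), mul_assoc, ← h_stft,
    kernelOperator_besselKernel_eq le_rfl f.integrable, ← integral_const_mul]
  congr 1 with η
  have h_cancel : (((1 + ‖η‖ ^ 2) ^ (-(k / 2)) : ℝ) : ℂ) *
      (((1 + ‖η‖ ^ 2) ^ (k / 2) : ℝ) : ℂ) = 1 := by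
    rw [← Complex.ofReal_mul, ← Real.rpow_add (by positivity), neg_add_cancel, Real.rpow_zero,
      Complex.ofReal_one]
  rw [hFT, besselPacket, besselPacket, Complex.ofReal_mul]
  simp only [zero_div, neg_zero, Real.rpow_zero, mul_one, Complex.ofReal_one, one_mul]
  linear_combination (((1 + ‖z.2‖ ^ 2) ^ (k / 2) : ℝ) : ℂ) *
    (Complex.exp (-Complex.I * (⟪z.1, z.2⟫ : ℂ)) * gaussianPacket (1 / 2) z.2 z.1 η) *
    FT d f η * h_cancel

lemma ofReal_rpow_mul_enorm_stft_le (hk : 0 ≤ k) (f : SchwartzMap (E d) ℂ) (z : P d) :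
    ENNReal.ofReal ((1 + ‖z.2‖ ^ 2) ^ (k / 2)) * ‖stft d f z‖ₑ ≤
      ‖kernelOperator volume (besselKernel d k) (besselh d 1 k f) z‖ₑ := by
  rw [kernelOperator_besselKernel_besselh hk, enorm_mul, enorm_coe_of_nonneg (by positivity)]
  gcongr
  refine le_mul_of_one_le_left (by positivity) (Real.one_le_rpow ?_ (by positivity))
  linarith [Real.pi_gt_three]

end BesselPotential

section PhaseWeight

variable {V : Type*} [NormedAddCommGroup V] [InnerProductSpace ℝ V] [FiniteDimensional ℝ V]
  [MeasurableSpace V] [BorelSpace V]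

lemma integrable_one_add_norm_sq_rpow_neg {r : ℝ} (hr : (Module.finrank ℝ V : ℝ) < 2 * r) :
    Integrable fun ξ : V => (1 + ‖ξ‖ ^ 2) ^ (-r) := by
  simpa only [neg_div, mul_div_cancel_left₀ r (two_ne_zero' ℝ)] using
    integrable_rpow_neg_one_add_norm_sq (E := V) (μ := volume) hr

omit [FiniteDimensional ℝ V] [MeasurableSpace V] [BorelSpace V] in
lemma one_add_norm_sq_rpow_neg_le {r ρ : ℝ} (hr : 0 ≤ r) (hρ : 0 < ρ) {ξ : V}
    (hξ : ρ ^ 2 < 1 + ‖ξ‖ ^ 2) :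
    (1 + ‖ξ‖ ^ 2) ^ (-r) ≤ 2 ^ r * ρ ^ (-(2 * r)) * (1 + ‖ρ⁻¹ • ξ‖ ^ 2) ^ (-r) := by
  have h_scale : ρ ^ 2 * ‖ρ⁻¹ • ξ‖ ^ 2 = ‖ξ‖ ^ 2 := by
    rw [norm_smul, norm_inv, Real.norm_of_nonneg hρ.le]
    field_simp
  have h_const : (2 : ℝ) ^ r * ρ ^ (-(2 * r)) = (2⁻¹ * ρ ^ 2) ^ (-r) := by
    rw [Real.mul_rpow (by norm_num) (by positivity), ← Real.rpow_neg_eq_inv_rpow, neg_neg,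
      ← Real.rpow_natCast_mul hρ.le]
    norm_num
  rw [h_const, ← Real.mul_rpow (by positivity) (by positivity)]
  exact Real.rpow_le_rpow_of_nonpos (by positivity) (by nlinarith) (by linarith)

lemma setLIntegral_one_add_norm_sq_rpow_neg_le {r ρ : ℝ}
    (hr : (Module.finrank ℝ V : ℝ) < 2 * r) (hρ : 0 < ρ) :
    ∫⁻ ξ : V in {ξ | ρ ^ 2 < 1 + ‖ξ‖ ^ 2}, ENNReal.ofReal ((1 + ‖ξ‖ ^ 2) ^ (-r)) ≤
      ENNReal.ofReal (2 ^ r * (∫ ξ : V, (1 + ‖ξ‖ ^ 2) ^ (-r)) *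
        ρ ^ (Module.finrank ℝ V - 2 * r)) := by
  have hr₀ : 0 ≤ r := by linarith [(Module.finrank ℝ V).cast_nonneg (α := ℝ)]
  have h_int : Integrable fun ξ : V => (1 + ‖ρ⁻¹ • ξ‖ ^ 2) ^ (-r) :=
    (integrable_one_add_norm_sq_rpow_neg hr).comp_smul (by positivity)
  calc _ ≤ ∫⁻ ξ : V in {ξ | ρ ^ 2 < 1 + ‖ξ‖ ^ 2}, ENNReal.ofReal
          (2 ^ r * ρ ^ (-(2 * r)) * (1 + ‖ρ⁻¹ • ξ‖ ^ 2) ^ (-r)) :=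
        setLIntegral_mono' (measurableSet_lt measurable_const (by fun_prop)) fun ξ hξ =>
          ENNReal.ofReal_le_ofReal (one_add_norm_sq_rpow_neg_le hr₀ hρ (Set.mem_ofPred.1 hξ))
    _ ≤ ∫⁻ ξ : V, ENNReal.ofReal (2 ^ r * ρ ^ (-(2 * r)) * (1 + ‖ρ⁻¹ • ξ‖ ^ 2) ^ (-r)) :=
        setLIntegral_le_lintegral _ _
    _ = _ := by
        rw [← ofReal_integral_eq_lintegral_ofReal (h_int.const_mul _)
          (.of_forall fun ξ => by positivity), integral_const_mul,
          Measure.integral_comp_smul volume (fun ξ : V => (1 + ‖ξ‖ ^ 2) ^ (-r)) ρ⁻¹,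
          abs_of_pos (by positivity), inv_pow, inv_inv, smul_eq_mul, sub_eq_add_neg,
          Real.rpow_add hρ, Real.rpow_natCast]
        congr 1
        ring

end PhaseWeight

section BesselEmbedding

variable {d : ℕ} {k p : ℝ}

/-- The measure `(1+|ξ|²)^{-d} dx dξ` on phase space. -/
def phaseWeight (d : ℕ) : Measure (P d) :=
  volume.withDensity fun z => ENNReal.ofReal ((1 + ‖z.2‖ ^ 2) ^ (-(d : ℝ)))

/-- The operator with kernel `(1+|ξ|²)^{d/2} besselKernel d k`. With respect to `phaseWeight d` it
is of strong type `(2,2)`, and of weak type `(1,1)` although not of strong type `(1,1)`. -/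
def weightedBesselOperator (d : ℕ) (k : ℝ) (F : E d → ℂ) (z : P d) : ℂ :=
  (((1 + ‖z.2‖ ^ 2) ^ ((d : ℝ) / 2) : ℝ) : ℂ) * kernelOperator volume (besselKernel d k) F z

lemma stronglyMeasurable_weightedBesselOperator (k : ℝ) {F : E d → ℂ} (hF : StronglyMeasurable F) :
    StronglyMeasurable (weightedBesselOperator d k F) :=
  (Measurable.stronglyMeasurable (by fun_prop)).mul
    (stronglyMeasurable_kernelOperator (stronglyMeasurable_besselKernel k) hF)

lemma lintegral_enorm_weightedBesselOperator_rpow (k : ℝ) {q : ℝ} (hq : 0 ≤ q) {F : E d → ℂ}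
    (hF : StronglyMeasurable F) :
    ∫⁻ z, ‖weightedBesselOperator d k F z‖ₑ ^ q ∂phaseWeight d =
      ∫⁻ z : P d, ENNReal.ofReal ((1 + ‖z.2‖ ^ 2) ^ ((d : ℝ) / 2 * (q - 2))) *
        ‖kernelOperator volume (besselKernel d k) F z‖ₑ ^ q := by
  rw [phaseWeight, lintegral_withDensity_eq_lintegral_mul _ (by fun_prop)
    ((stronglyMeasurable_weightedBesselOperator k hF).enorm.pow_const _)]
  refine lintegral_congr fun z => ?_
  rw [Pi.mul_apply, weightedBesselOperator, enorm_mul, ENNReal.mul_rpow_of_nonneg _ _ hq,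
    ← mul_assoc, enorm_coe_of_nonneg (by positivity),
    ENNReal.ofReal_rpow_of_nonneg (by positivity) hq, ← ENNReal.ofReal_mul (by positivity),
    ← Real.rpow_mul (by positivity), ← Real.rpow_add (by positivity)]
  congr 3
  ring

lemma exists_setLIntegral_phaseWeight_le (hd : 1 ≤ d) :
    ∃ C : ℝ≥0∞, C ≠ ∞ ∧ ∀ (s : NNReal) ⦃t : ℝ⦄, 0 < t →
      ∫⁻ ξ : E d in {ξ | ENNReal.ofReal t < ENNReal.ofReal ((1 + ‖ξ‖ ^ 2) ^ ((d : ℝ) / 2)) * s},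
        ENNReal.ofReal ((1 + ‖ξ‖ ^ 2) ^ (-(d : ℝ))) ≤ C * s * ENNReal.ofReal (t ^ (-1 : ℝ)) := by
  have hd₀ : (0 : ℝ) < d := by exact_mod_cast hd
  refine ⟨ENNReal.ofReal (2 ^ (d : ℝ) * ∫ ξ : E d, (1 + ‖ξ‖ ^ 2) ^ (-(d : ℝ))),
    ENNReal.ofReal_ne_top, fun s t ht => ?_⟩
  rcases eq_zero_or_pos s with rfl | hs
  · simp
  set ρ : ℝ := (t / s) ^ (1 / (d : ℝ))
  have h_sub : {ξ : E d | ENNReal.ofReal t < ENNReal.ofReal ((1 + ‖ξ‖ ^ 2) ^ ((d : ℝ) / 2)) * s} ⊆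
      {ξ | ρ ^ 2 < 1 + ‖ξ‖ ^ 2} := by
    intro ξ hξ
    rw [Set.mem_ofPred_eq, ← ENNReal.ofReal_coe_nnreal, ← ENNReal.ofReal_mul (by positivity),
      ENNReal.ofReal_lt_ofReal_iff (by positivity), ← div_lt_iff₀ (by positivity)] at hξ
    have h := Real.rpow_lt_rpow (by positivity) hξ (z := 2 / d) (by positivity)
    rw [← Real.rpow_mul (by positivity), div_mul_div_cancel₀ two_ne_zero,
      div_self hd₀.ne', Real.rpow_one] at h
    rwa [Set.mem_ofPred_eq, ← Real.rpow_mul_natCast (by positivity), one_div_mul_eq_div,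
      Nat.cast_ofNat]
  have h_pow : ρ ^ ((d : ℝ) - 2 * d) = s * t ^ (-1 : ℝ) := by
    rw [← Real.rpow_mul (by positivity), show 1 / (d : ℝ) * (d - 2 * d) = -1 by field_simp; ring,
      Real.rpow_neg_one, Real.rpow_neg_one, inv_div, div_eq_mul_inv]
  have h := setLIntegral_one_add_norm_sq_rpow_neg_le (V := E d) (r := d) (ρ := ρ)
    (by rw [finrank_euclideanSpace_fin]; linarith) (by positivity)
  rw [finrank_euclideanSpace_fin, h_pow, ENNReal.ofReal_mul (by positivity),
    ENNReal.ofReal_mul NNReal.zero_le_coe, ENNReal.ofReal_coe_nnreal, ← mul_assoc] at h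
  exact (lintegral_mono_set h_sub).trans h

lemma exists_hasWeakType_one_weightedBesselOperator (hd : 1 ≤ d) (hk : 0 ≤ k) :
    ∃ C : ℝ≥0∞, C ≠ ∞ ∧
      HasWeakType (weightedBesselOperator d k) 1 volume (phaseWeight d) C := by
  obtain ⟨S, hS, h_slice⟩ := exists_setLIntegral_phaseWeight_le hd
  obtain ⟨B, hB, h_majorant⟩ := exists_enorm_kernelOperator_besselKernel_le (d := d) hk
  refine ⟨S * B, by finiteness, fun F hFm hF t ht => ?_⟩
  obtain ⟨a, ha, ha_int, h_le⟩ := h_majorant F hFm.measurable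
  have ha_top : ∀ᵐ x, a x < ∞ := by
    refine ae_lt_top ha (ha_int ▸ ENNReal.mul_ne_top hB ?_)
    exact hF.hasFiniteIntegral.ne
  set U : Set (P d) :=
    {z | ENNReal.ofReal t < ENNReal.ofReal ((1 + ‖z.2‖ ^ 2) ^ ((d : ℝ) / 2)) * a z.1}
  have hU : MeasurableSet U := measurableSet_lt measurable_const (by fun_prop)
  have h_sub : {z | t < ‖weightedBesselOperator d k F z‖} ⊆ U := by
    intro z hz
    refine ((ENNReal.ofReal_lt_ofReal_iff (ht.trans hz)).2 hz).trans_le ?_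
    rw [ofReal_norm, weightedBesselOperator, enorm_mul, enorm_coe_of_nonneg (by positivity)]
    gcongr
    exact h_le z
  calc phaseWeight d {z | t < ‖weightedBesselOperator d k F z‖}
      ≤ phaseWeight d U := measure_mono h_sub
    _ = ∫⁻ x, ∫⁻ ξ in Prod.mk x ⁻¹' U, ENNReal.ofReal ((1 + ‖ξ‖ ^ 2) ^ (-(d : ℝ))) := by
        rw [phaseWeight, withDensity_apply _ hU, ← lintegral_indicator hU, Measure.volume_eq_prod,
          lintegral_prod _ (Measurable.indicator (by fun_prop) hU).aemeasurable]
        congr 1 with x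
        exact lintegral_indicator (hU.preimage measurable_prodMk_left) fun ξ : E d =>
          ENNReal.ofReal ((1 + ‖ξ‖ ^ 2) ^ (-(d : ℝ)))
    _ ≤ ∫⁻ x, S * a x * ENNReal.ofReal (t ^ (-1 : ℝ)) := by
        refine lintegral_mono_ae ?_
        filter_upwards [ha_top] with x hx
        have h := h_slice (a x).toNNReal ht
        rwa [ENNReal.coe_toNNReal hx.ne] at h
    _ = S * B * (∫⁻ y, ‖F y‖ₑ ^ (1 : ℝ)) * ENNReal.ofReal (t ^ (-1 : ℝ)) := by
        simp only [ENNReal.rpow_one]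
        rw [lintegral_mul_const _ (ha.const_mul S), lintegral_const_mul _ ha, ha_int, mul_assoc S B]

lemma exists_hasStrongType_two_weightedBesselOperator (hk : 0 ≤ k) :
    ∃ C : ℝ≥0∞, C ≠ ∞ ∧
      HasStrongType (weightedBesselOperator d k) 2 volume (phaseWeight d) C := by
  obtain ⟨C, hC, h⟩ := exists_hasStrongType_two_kernelOperator_besselKernel (d := d) hk
  refine ⟨C, hC, fun F hFm hF => ?_⟩
  rw [lintegral_enorm_weightedBesselOperator_rpow k zero_le_two hFm]
  simpa only [sub_self, mul_zero, Real.rpow_zero, ENNReal.ofReal_one, one_mul] using h hFm hF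

lemma norm_weightedBesselOperator_add_le (hk : 0 ≤ k) {F G : E d → ℂ} (hF : Integrable F)
    (hG : Integrable G) (z : P d) :
    ‖weightedBesselOperator d k (F + G) z‖ ≤
      ‖weightedBesselOperator d k F z‖ + ‖weightedBesselOperator d k G z‖ := by
  obtain ⟨M, hM⟩ := exists_norm_besselKernel_le_const (d := d) hk
  rw [weightedBesselOperator, kernelOperator_add (stronglyMeasurable_besselKernel k) hM hF hG,
    mul_add]
  exact norm_add_le _ _

lemma exists_hasStrongType_weightedBesselOperator (hd : 1 ≤ d) (hk : 0 ≤ k)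
    (hp₁ : 1 < p) (hp₂ : p ≤ 2) :
    ∃ C : ℝ≥0∞, C ≠ ∞ ∧ HasStrongType (weightedBesselOperator d k) p volume (phaseWeight d) C := by
  obtain ⟨C₂, hC₂, h₂⟩ := exists_hasStrongType_two_weightedBesselOperator (d := d) hk
  rcases hp₂.eq_or_lt with rfl | hp₂
  · exact ⟨C₂, hC₂, h₂⟩
  obtain ⟨C₁, hC₁, h₁⟩ := exists_hasWeakType_one_weightedBesselOperator hd hk
  have h_meas : ∀ F : E d → ℂ, StronglyMeasurable F → Integrable F →
      AEStronglyMeasurable (weightedBesselOperator d k F) (phaseWeight d) := fun F hF _ =>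
    (stronglyMeasurable_weightedBesselOperator k hF).aestronglyMeasurable
  exact ⟨_, by finiteness, fun F hFm hF => lintegral_rpow_le_of_hasWeakType zero_lt_one hp₁ hp₂
    (fun _ _ => norm_weightedBesselOperator_add_le hk) h₁ (h₂.hasWeakType zero_lt_two h_meas)
    hFm hF (h_meas F hFm hF)⟩

lemma exists_lintegral_enorm_stft_rpow_le (hd : 1 ≤ d) (hp₁ : 1 < p) (hp₂ : p ≤ 2)
    (hk : d * (2 - p) ≤ k * p) :
    ∃ C : ℝ≥0∞, C ≠ ∞ ∧ ∀ f : SchwartzMap (E d) ℂ,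
      ∫⁻ z, ‖stft d f z‖ₑ ^ p ≤ C * ∫⁻ y, ‖besselh d 1 k f y‖ₑ ^ p := by
  have hp₀ : 0 < p := zero_lt_one.trans hp₁
  have hk₀ : 0 ≤ k := nonneg_of_mul_nonneg_left
    ((mul_nonneg d.cast_nonneg (sub_nonneg.2 hp₂)).trans hk) hp₀
  obtain ⟨C, hC, h⟩ := exists_hasStrongType_weightedBesselOperator hd hk₀ hp₁ hp₂
  refine ⟨C, hC, fun f => ?_⟩
  obtain ⟨F, hF, -⟩ := exists_schwartzMap_eq_besselh k f
  have hFm := F.continuous.stronglyMeasurable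
  have h := h hFm F.integrable
  rw [lintegral_enorm_weightedBesselOperator_rpow k hp₀.le hFm, hF] at h
  refine le_trans ?_ h
  refine lintegral_mono fun z => ?_
  set X : ℝ := 1 + ‖z.2‖ ^ 2
  have hX : 1 ≤ X := le_add_of_nonneg_right (sq_nonneg _)
  have h_le := ENNReal.rpow_le_rpow (ofReal_rpow_mul_enorm_stft_le hk₀ f z) hp₀.le
  rw [ENNReal.mul_rpow_of_nonneg _ _ hp₀.le, ENNReal.ofReal_rpow_of_nonneg (by positivity) hp₀.le,
    ← Real.rpow_mul (by positivity)] at h_le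
  have h_one : 1 ≤ ENNReal.ofReal (X ^ ((d : ℝ) / 2 * (p - 2))) *
      ENNReal.ofReal (X ^ (k / 2 * p)) := by
    rw [← ENNReal.ofReal_mul (by positivity), ← Real.rpow_add (by positivity),
      ENNReal.one_le_ofReal]
    exact Real.one_le_rpow hX (by linarith)
  calc ‖stft d f z‖ₑ ^ p ≤ _ * ‖stft d f z‖ₑ ^ p := le_mul_of_one_le_left' h_one
    _ ≤ _ := by
      rw [mul_assoc]
      gcongr

end BesselEmbedding

section ShortTimeFourierTransform

variable {d : ℕ} {u : E d → ℂ} {p : ℝ}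

lemma norm_pkbar_le_one (z : P d) (y : E d) : ‖pkbar d z y‖ ≤ 1 := by
  have h_phase : ‖Complex.exp (-Complex.I * (⟪y, z.2⟫ : ℂ))‖ = 1 := by
    rw [Complex.norm_exp]
    simp
  rw [pkbar, norm_mul, h_phase, one_mul, Complex.norm_of_nonneg (by positivity),
    Real.exp_le_one_iff]
  linarith [sq_nonneg ‖y - z.1‖]

lemma norm_stft_le (hu : Integrable u) (z : P d) : ‖stft d u z‖ ≤ ∫ y, ‖u y‖ :=
  norm_integral_le_of_norm_le hu.norm (.of_forall fun y => by
    rw [norm_mul]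
    exact mul_le_of_le_one_right (norm_nonneg _) (norm_pkbar_le_one z y))

lemma stronglyMeasurable_stft (hu : StronglyMeasurable u) : StronglyMeasurable (stft d u) := by
  refine StronglyMeasurable.integral_prod_right' (f := fun q : P d × E d =>
    u q.2 * pkbar d q.1 q.2) ((hu.comp_measurable measurable_snd).mul ?_)
  unfold pkbar
  exact Measurable.stronglyMeasurable (by fun_prop)

lemma enorm_stft_le_of_ofReal_rpow_mul_le {k : ℝ} {z : P d} {b : ℝ≥0∞}
    (h : ENNReal.ofReal ((1 + ‖z.2‖ ^ 2) ^ k) * ‖stft d u z‖ₑ ≤ b) :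
    ‖stft d u z‖ₑ ≤ b * ENNReal.ofReal ((1 + ‖z.2‖ ^ 2) ^ (-k)) := by
  rw [Real.rpow_neg (by positivity), ENNReal.ofReal_inv_of_pos (by positivity), ← div_eq_mul_inv,
    ENNReal.le_div_iff_mul_le (.inl ?_) (.inl ENNReal.ofReal_ne_top), mul_comm]
  · exact h
  · exact (ENNReal.ofReal_pos.2 (by positivity)).ne'

lemma integrable_stft (f : SchwartzMap (E d) ℂ) : Integrable (stft d f) := by
  have hr : (0 : ℝ) ≤ d + 1 := by positivity
  obtain ⟨B, hB, h_majorant⟩ := exists_enorm_kernelOperator_besselKernel_le (d := d) hr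
  obtain ⟨F, hF, -⟩ := exists_schwartzMap_eq_besselh (d + 1) f
  obtain ⟨a, ha, ha_int, h_le⟩ := h_majorant F F.continuous.measurable
  have h_weight : Integrable fun ξ : E d => (1 + ‖ξ‖ ^ 2) ^ (-(((d : ℝ) + 1) / 2)) := by
    refine integrable_one_add_norm_sq_rpow_neg ?_
    rw [finrank_euclideanSpace_fin]
    linarith
  refine ⟨(stronglyMeasurable_stft f.continuous.stronglyMeasurable).aestronglyMeasurable, ?_⟩
  calc ∫⁻ z, ‖stft d f z‖ₑ
      ≤ ∫⁻ z : P d, a z.1 * ENNReal.ofReal ((1 + ‖z.2‖ ^ 2) ^ (-(((d : ℝ) + 1) / 2))) :=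
        lintegral_mono fun z => enorm_stft_le_of_ofReal_rpow_mul_le
          ((ofReal_rpow_mul_enorm_stft_le hr f z).trans (hF ▸ h_le z))
    _ = B * (∫⁻ y, ‖F y‖ₑ) *
          ∫⁻ ξ : E d, ENNReal.ofReal ((1 + ‖ξ‖ ^ 2) ^ (-(((d : ℝ) + 1) / 2))) := by
        rw [← ha_int]
        exact lintegral_prod_mul ha.aemeasurable h_weight.1.aemeasurable.ennreal_ofReal
    _ < ∞ := ENNReal.mul_lt_top (ENNReal.mul_lt_top hB.lt_top F.integrable.2)
        h_weight.lintegral_lt_top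

lemma integrable_norm_stft_rpow (hp : 1 ≤ p) (f : SchwartzMap (E d) ℂ) :
    Integrable fun z => ‖stft d f z‖ ^ p := by
  have h_meas : Measurable (stft d f) :=
    (stronglyMeasurable_stft f.continuous.stronglyMeasurable).measurable
  refine ((integrable_stft f).norm.const_mul ((∫ y, ‖f y‖) ^ (p - 1))).mono'
    (Measurable.aestronglyMeasurable (by fun_prop)) (.of_forall fun z => ?_)
  have h_split : ‖stft d f z‖ ^ p = ‖stft d f z‖ ^ (p - 1) * ‖stft d f z‖ := by
    rw [← Real.rpow_add_one' (norm_nonneg _) (by linarith), sub_add_cancel]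
  rw [Real.norm_of_nonneg (by positivity), h_split]
  gcongr
  exact norm_stft_le f.integrable z

lemma stft_mk_eq_FT (u : E d → ℂ) (x : E d) :
    (fun ξ => stft d u (x, ξ)) = FT d fun y => (Real.exp (-‖y - x‖ ^ 2 / 2) : ℂ) * u y := by
  funext ξ
  rw [stft, FT]
  congr 1 with y
  rw [pkbar]
  ring

lemma star_pkbar (z : P d) (y : E d) :
    star (pkbar d z y) =
      Complex.exp (Complex.I * (⟪y, z.2⟫ : ℂ)) * Real.exp (-‖y - z.1‖ ^ 2 / 2) := by
  rw [pkbar, RCLike.star_def, map_mul, Complex.conj_ofReal, ← Complex.exp_conj, map_mul, map_neg,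
    Complex.conj_I, Complex.conj_ofReal, neg_neg]

lemma integral_star_pkbar_mul_stft_mk (hu : Continuous u) (hu_int : Integrable u) {x : E d}
    (hx : Integrable fun ξ => stft d u (x, ξ)) (y : E d) :
    ∫ ξ, star (pkbar d (x, ξ) y) * stft d u (x, ξ) =
      ((2 * π) ^ d : ℝ) * u y * (Real.exp (-1 * ‖x - y‖ ^ 2) : ℝ) := by
  have hv : Integrable fun y => (Real.exp (-‖y - x‖ ^ 2 / 2) : ℂ) * u y := by
    refine hu_int.bdd_mul (c := 1) (Continuous.aestronglyMeasurable (by fun_prop))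
      (.of_forall fun y => ?_)
    rw [Complex.norm_of_nonneg (by positivity), Real.exp_le_one_iff]
    linarith [sq_nonneg ‖y - x‖]
  have h_inv := integral_exp_inner_mul_FT (by fun_prop) hv (stft_mk_eq_FT u x ▸ hx) y
  have h_sq : Real.exp (-1 * ‖x - y‖ ^ 2) =
      Real.exp (-‖y - x‖ ^ 2 / 2) * Real.exp (-‖y - x‖ ^ 2 / 2) := by
    rw [← Real.exp_add, norm_sub_rev]
    ring_nf
  rw [← stft_mk_eq_FT] at h_inv
  simp only [star_pkbar, mul_right_comm _ (Real.exp _ : ℂ)]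
  rw [integral_mul_const, h_inv, h_sq, Complex.ofReal_mul]
  ring

lemma integral_star_pkbar_mul_stft (hu : Continuous u) (hu_int : Integrable u)
    (h_stft : Integrable (stft d u)) (y : E d) :
    ∫ z, star (pkbar d z y) * stft d u z = ((2 * π) ^ d * π ^ ((d : ℝ) / 2) : ℝ) * u y := by
  have h_int : Integrable fun z => star (pkbar d z y) * stft d u z := by
    refine h_stft.bdd_mul (c := 1) ?_ (.of_forall fun z => ?_)
    · simp only [star_pkbar]
      exact Continuous.aestronglyMeasurable (by fun_prop)
    · rw [norm_star]
      exact norm_pkbar_le_one z y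
  have h_slice : ∀ᵐ x, ∫ ξ, star (pkbar d (x, ξ) y) * stft d u (x, ξ) =
      ((2 * π) ^ d : ℝ) * u y * (Real.exp (-1 * ‖x - y‖ ^ 2) : ℝ) := by
    rw [Measure.volume_eq_prod] at h_stft
    filter_upwards [h_stft.prod_right_ae] with x hx
    exact integral_star_pkbar_mul_stft_mk hu hu_int hx y
  rw [Measure.volume_eq_prod] at h_int ⊢
  rw [integral_prod _ h_int, integral_congr_ae h_slice, integral_const_mul,
    integral_complex_ofReal,
    integral_sub_right_eq_self (fun x : E d => Real.exp (-1 * ‖x‖ ^ 2)) y,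
    GaussianFourier.integral_rexp_neg_mul_sq_norm one_pos, finrank_euclideanSpace_fin, div_one,
    Complex.ofReal_mul]
  ring

/-- The kernel of `(2π)^{d/2}` times the synthesis operator `W ↦ ∫ W(z) π(z)g dz`, normalized so as
to be the adjoint of `besselKernel d 0`. -/
def synthesisKernel (d : ℕ) (y : E d) (z : P d) : ℂ := star (besselKernel d 0 z y)

lemma stronglyMeasurable_synthesisKernel :
    StronglyMeasurable (Function.uncurry (synthesisKernel d)) := by
  have h_swap := (stronglyMeasurable_besselKernel (d := d) 0).comp_measurable measurable_swap
  exact continuous_star.comp_stronglyMeasurable h_swap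

lemma exists_hasStrongType_one_synthesis :
    ∃ C : ℝ≥0∞, C ≠ ∞ ∧
      HasStrongType (kernelOperator volume (synthesisKernel d)) 1 volume volume C := by
  obtain ⟨B, hB, h_row⟩ := exists_lintegral_besselKernel_le (d := d) le_rfl
  exact ⟨B, hB, hasStrongType_one_kernelOperator stronglyMeasurable_synthesisKernel fun z => by
    simpa only [synthesisKernel, RCLike.star_def, RCLike.enorm_conj] using h_row z⟩

lemma exists_hasStrongType_two_synthesis :
    ∃ C : ℝ≥0∞, C ≠ ∞ ∧
      HasStrongType (kernelOperator volume (synthesisKernel d)) 2 volume volume C := by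
  obtain ⟨M, hM⟩ := exists_norm_besselKernel_le_const (d := d) le_rfl
  obtain ⟨B, hB, h_row⟩ := exists_lintegral_besselKernel_le (d := d) le_rfl
  obtain ⟨C, hC, h_analysis⟩ := exists_hasStrongType_two_kernelOperator_besselKernel (d := d) le_rfl
  exact ⟨C, hC, h_analysis.adjoint_kernelOperator (stronglyMeasurable_besselKernel 0) hM h_row hB⟩

lemma exists_hasStrongType_synthesis (hp₁ : 1 ≤ p) (hp₂ : p ≤ 2) :
    ∃ C : ℝ≥0∞, C ≠ ∞ ∧
      HasStrongType (kernelOperator volume (synthesisKernel d)) p volume volume C := by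
  obtain ⟨C₁, hC₁, h₁⟩ := exists_hasStrongType_one_synthesis (d := d)
  obtain ⟨C₂, hC₂, h₂⟩ := exists_hasStrongType_two_synthesis (d := d)
  rcases hp₁.eq_or_lt with rfl | hp₁
  · exact ⟨C₁, hC₁, h₁⟩
  rcases hp₂.eq_or_lt with rfl | hp₂
  · exact ⟨C₂, hC₂, h₂⟩
  obtain ⟨M, hM⟩ := exists_norm_besselKernel_le_const (d := d) le_rfl
  have h_bound : ∀ (y : E d) (z : P d), ‖synthesisKernel d y z‖ ≤ M := fun y z =>
    (norm_star _).trans_le (hM z y)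
  have h_meas : ∀ F : P d → ℂ, StronglyMeasurable F → Integrable F →
      AEStronglyMeasurable (kernelOperator volume (synthesisKernel d) F) := fun F hF _ =>
    (stronglyMeasurable_kernelOperator stronglyMeasurable_synthesisKernel hF).aestronglyMeasurable
  refine ⟨_, by finiteness, fun F hFm hF => lintegral_rpow_le_of_hasWeakType zero_lt_one hp₁ hp₂
    (fun F G hF hG y => ?_) (h₁.hasWeakType zero_lt_one h_meas) (h₂.hasWeakType zero_lt_two h_meas)
    hFm hF (h_meas F hFm hF)⟩
  rw [kernelOperator_add stronglyMeasurable_synthesisKernel h_bound hF hG]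
  exact norm_add_le _ _

lemma enorm_le_enorm_synthesis_stft (f : SchwartzMap (E d) ℂ) (y : E d) :
    ‖f y‖ₑ ≤ ‖kernelOperator volume (synthesisKernel d) (stft d f) y‖ₑ := by
  have h_inv : kernelOperator volume (synthesisKernel d) (stft d f) y =
      ((2 * π) ^ ((d : ℝ) / 2) * ((2 * π) ^ d * π ^ ((d : ℝ) / 2)) : ℝ) * f y := by
    rw [Complex.ofReal_mul, mul_assoc, ← integral_star_pkbar_mul_stft f.continuous f.integrable
      (integrable_stft f), ← integral_const_mul]
    simp only [kernelOperator, synthesisKernel, besselKernel_zero, star_mul', mul_assoc,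
      RCLike.star_def, Complex.conj_ofReal]
  have h_pi := Real.pi_gt_three
  rw [h_inv, enorm_mul, enorm_coe_of_nonneg (by positivity)]
  refine le_mul_of_one_le_left' (ENNReal.one_le_ofReal.2 ?_)
  exact one_le_mul_of_one_le_of_one_le (Real.one_le_rpow (by linarith) (by positivity))
    (one_le_mul_of_one_le_of_one_le (one_le_pow₀ (by linarith))
      (Real.one_le_rpow (by linarith) (by positivity)))

lemma exists_lintegral_enorm_rpow_le_stft (hp₁ : 1 ≤ p) (hp₂ : p ≤ 2) :
    ∃ C : ℝ≥0∞, C ≠ ∞ ∧ ∀ f : SchwartzMap (E d) ℂ,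
      ∫⁻ y, ‖f y‖ₑ ^ p ≤ C * ∫⁻ z, ‖stft d f z‖ₑ ^ p := by
  obtain ⟨C, hC, h_synthesis⟩ := exists_hasStrongType_synthesis (d := d) hp₁ hp₂
  refine ⟨C, hC, fun f => le_trans (lintegral_mono fun y => ?_) (h_synthesis
    (stronglyMeasurable_stft f.continuous.stronglyMeasurable) (integrable_stft f))⟩
  exact ENNReal.rpow_le_rpow (enorm_le_enorm_synthesis_stft f y) (zero_le_one.trans hp₁)

end ShortTimeFourierTransform

section Dilation

variable {d : ℕ} {h p : ℝ}

lemma exists_schwartzMap_eq_dil (hh : 0 < h) (f : SchwartzMap (E d) ℂ) :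
    ∃ u : SchwartzMap (E d) ℂ, ⇑u = dil d h f := by
  let e : E d ≃L[ℝ] E d := ContinuousLinearEquiv.smulLeft
    (Units.mk0 (h ^ ((1 : ℝ) / 2)) (Real.rpow_pos_of_pos hh _).ne')
  exact ⟨((h ^ ((d : ℝ) / 4) : ℝ) : ℂ) • SchwartzMap.compCLMOfContinuousLinearEquiv ℂ e f, rfl⟩

lemma integral_comp_rpow_half_smul {W : Type*} [NormedAddCommGroup W] [NormedSpace ℝ W]
    (hh : 0 < h) (G : E d → W) :
    ∫ x, G (h ^ ((1 : ℝ) / 2) • x) = h ^ (-((d : ℝ) / 2)) • ∫ x, G x := by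
  rw [Measure.integral_comp_smul, finrank_euclideanSpace_fin, abs_of_pos (by positivity),
    ← Real.rpow_mul_natCast hh.le, ← Real.rpow_neg hh.le, one_div_mul_eq_div]

lemma integral_norm_dil_rpow (hh : 0 < h) (u : E d → ℂ) (p : ℝ) :
    ∫ x, ‖dil d h u x‖ ^ p = h ^ ((d : ℝ) / 4 * p - d / 2) * ∫ x, ‖u x‖ ^ p := by
  have h_norm : ∀ x, ‖dil d h u x‖ ^ p =
      h ^ ((d : ℝ) / 4 * p) * ‖u (h ^ ((1 : ℝ) / 2) • x)‖ ^ p := fun x => by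
    rw [dil, norm_mul, Complex.norm_of_nonneg (by positivity),
      Real.mul_rpow (by positivity) (norm_nonneg _), ← Real.rpow_mul hh.le]
  simp only [h_norm]
  rw [integral_const_mul, integral_comp_rpow_half_smul hh fun x => ‖u x‖ ^ p, smul_eq_mul,
    ← mul_assoc, ← Real.rpow_add hh, sub_eq_add_neg]

lemma integral_norm_dil_rpow_rpow (hh : 0 < h) (hp : p ≠ 0) (u : E d → ℂ) :
    (∫ x, ‖dil d h u x‖ ^ p) ^ (1 / p) =
      h ^ ((d : ℝ) * (1 / 2 - 1 / p) / 2) * (∫ x, ‖u x‖ ^ p) ^ (1 / p) := by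
  rw [integral_norm_dil_rpow hh, Real.mul_rpow (by positivity)
    (integral_nonneg fun _ => by positivity), ← Real.rpow_mul hh.le]
  congr 2
  field_simp
  ring

lemma FT_dil (hh : 0 < h) (u : E d → ℂ) (ξ : E d) :
    FT d (dil d h u) (h ^ ((1 : ℝ) / 2) • ξ) = (h ^ (-((d : ℝ) / 4)) : ℝ) * FT d u ξ := by
  calc FT d (dil d h u) (h ^ ((1 : ℝ) / 2) • ξ)
      = (h ^ ((d : ℝ) / 4) : ℝ) * ∫ x,
          Complex.exp (-Complex.I * (⟪h ^ ((1 : ℝ) / 2) • x, ξ⟫ : ℂ)) *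
            u (h ^ ((1 : ℝ) / 2) • x) := by
        rw [FT, ← integral_const_mul]
        congr 1 with x
        simp only [dil, real_inner_smul_left, real_inner_smul_right]
        ring
    _ = (h ^ ((d : ℝ) / 4) * h ^ (-((d : ℝ) / 2)) : ℝ) * FT d u ξ := by
        rw [integral_comp_rpow_half_smul hh fun y =>
          Complex.exp (-Complex.I * (⟪y, ξ⟫ : ℂ)) * u y, Complex.real_smul, Complex.ofReal_mul,
          mul_assoc, FT]
    _ = _ := by
        rw [← Real.rpow_add hh]
        ring_nf

lemma besselh_dil (hh : 0 < h) (k : ℝ) (u : E d → ℂ) :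
    besselh d 1 k (dil d h u) = dil d h (besselh d h k u) := by
  have h_sq : (h ^ ((1 : ℝ) / 2)) ^ 2 = h := by
    rw [← Real.rpow_mul_natCast hh.le, one_div_mul_eq_div, Nat.cast_ofNat, div_self two_ne_zero,
      Real.rpow_one]
  have h_pow : h ^ ((d : ℝ) / 4) = h ^ ((d : ℝ) / 2) * h ^ (-((d : ℝ) / 4)) := by
    rw [← Real.rpow_add hh]
    ring_nf
  ext x
  have h_integrand : ∀ ξ : E d,
      Complex.exp (Complex.I * (⟪x, h ^ ((1 : ℝ) / 2) • ξ⟫ : ℂ)) *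
          (((1 + 1 * ‖h ^ ((1 : ℝ) / 2) • ξ‖ ^ 2) ^ (k / 2) : ℝ) : ℂ) *
          FT d (dil d h u) (h ^ ((1 : ℝ) / 2) • ξ) =
        (h ^ (-((d : ℝ) / 4)) : ℝ) *
          (Complex.exp (Complex.I * (⟪h ^ ((1 : ℝ) / 2) • x, ξ⟫ : ℂ)) *
            (((1 + h * ‖ξ‖ ^ 2) ^ (k / 2) : ℝ) : ℂ) * FT d u ξ) := fun ξ => by
    rw [FT_dil hh, norm_smul, mul_pow, Real.norm_of_nonneg (by positivity), h_sq, one_mul,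
      real_inner_smul_left, real_inner_smul_right]
    ring
  have h_comp := integral_comp_rpow_half_smul hh fun ξ : E d =>
    Complex.exp (Complex.I * (⟪x, ξ⟫ : ℂ)) * (((1 + 1 * ‖ξ‖ ^ 2) ^ (k / 2) : ℝ) : ℂ) *
      FT d (dil d h u) ξ
  simp only [h_integrand] at h_comp
  rw [integral_const_mul, Real.rpow_neg hh.le ((d : ℝ) / 2), eq_inv_smul_iff₀ (by positivity),
    Complex.real_smul] at h_comp
  rw [besselh, dil, besselh, ← h_comp, h_pow, Complex.ofReal_mul]
  ring

end Dilation

section NormComparison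

variable {d : ℕ} {p : ℝ}

lemma integrable_norm_rpow (hp : 0 < p) (f : SchwartzMap (E d) ℂ) :
    Integrable fun y => ‖f y‖ ^ p := by
  have h := (f.memLp (ENNReal.ofReal p)).integrable_norm_rpow
    (ENNReal.ofReal_pos.2 hp).ne' ENNReal.ofReal_ne_top
  rwa [ENNReal.toReal_ofReal hp.le] at h

lemma integral_norm_rpow_rpow_le {α β V W : Type*} [MeasurableSpace α] [MeasurableSpace β]
    [NormedAddCommGroup V] [NormedAddCommGroup W] {μ : Measure α} {ν : Measure β} {f : α → V}
    {g : β → W} {C : ℝ≥0∞} (hp : 0 ≤ p) (hC : C ≠ ∞) (hf : Integrable (fun x => ‖f x‖ ^ p) μ)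
    (hg : Integrable (fun x => ‖g x‖ ^ p) ν)
    (h : ∫⁻ x, ‖f x‖ₑ ^ p ∂μ ≤ C * ∫⁻ x, ‖g x‖ₑ ^ p ∂ν) :
    (∫ x, ‖f x‖ ^ p ∂μ) ^ (1 / p) ≤ C.toReal ^ (1 / p) * (∫ x, ‖g x‖ ^ p ∂ν) ^ (1 / p) := by
  simp only [← ofReal_norm_rpow hp] at h
  rw [← ofReal_integral_eq_lintegral_ofReal hf (.of_forall fun _ => by positivity),
    ← ofReal_integral_eq_lintegral_ofReal hg (.of_forall fun _ => by positivity),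
    ← ENNReal.ofReal_toReal hC, ← ENNReal.ofReal_mul ENNReal.toReal_nonneg,
    ENNReal.ofReal_le_ofReal_iff (by positivity)] at h
  rw [← Real.mul_rpow ENNReal.toReal_nonneg (by positivity)]
  gcongr

end NormComparison

section SemiclassicalEmbedding

variable {d : ℕ} {k p : ℝ}

lemma exists_norm_le_stft_dil (hp₁ : 1 ≤ p) (hp₂ : p ≤ 2) :
    ∃ C : ℝ, 0 ≤ C ∧ ∀ ⦃h : ℝ⦄, 0 < h → ∀ f : SchwartzMap (E d) ℂ,
      (∫ x, ‖f x‖ ^ p) ^ (1 / p) ≤ C * h ^ ((d : ℝ) * (1 / p - 1 / 2) / 2) *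
        (∫ z : P d, ‖stft d (dil d h f) z‖ ^ p) ^ (1 / p) := by
  have hp₀ : 0 < p := zero_lt_one.trans_le hp₁
  obtain ⟨C, hC, h_le⟩ := exists_lintegral_enorm_rpow_le_stft (d := d) hp₁ hp₂
  refine ⟨C.toReal ^ (1 / p), by positivity, fun h hh f => ?_⟩
  obtain ⟨u, hu⟩ := exists_schwartzMap_eq_dil hh f
  have h_norm := integral_norm_rpow_rpow_le hp₀.le hC (integrable_norm_rpow hp₀ u)
    (integrable_norm_stft_rpow hp₁ u) (h_le u)
  have h_pow : h ^ ((d : ℝ) * (1 / p - 1 / 2) / 2) = (h ^ ((d : ℝ) * (1 / 2 - 1 / p) / 2))⁻¹ := by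
    rw [← Real.rpow_neg hh.le]
    ring_nf
  rwa [hu, integral_norm_dil_rpow_rpow hh hp₀.ne', ← le_inv_mul_iff₀ (by positivity), ← h_pow,
    ← mul_assoc, mul_comm (h ^ _)] at h_norm

lemma exists_stft_dil_le_norm_besselh (hd : 1 ≤ d) (hp₁ : 1 < p) (hp₂ : p ≤ 2)
    (hk : 2 * d * (1 / p - 1 / 2) ≤ k) :
    ∃ C : ℝ, 0 ≤ C ∧ ∀ ⦃h : ℝ⦄, 0 < h → ∀ f : SchwartzMap (E d) ℂ,
      (∫ z : P d, ‖stft d (dil d h f) z‖ ^ p) ^ (1 / p) ≤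
        C * h ^ ((d : ℝ) * (1 / 2 - 1 / p) / 2) * (∫ x, ‖besselh d h k f x‖ ^ p) ^ (1 / p) := by
  have hp₀ : 0 < p := zero_lt_one.trans hp₁
  have hk' : d * (2 - p) ≤ k * p := by
    refine le_of_eq_of_le ?_ (mul_le_mul_of_nonneg_right hk hp₀.le)
    field_simp
  obtain ⟨C, hC, h_le⟩ := exists_lintegral_enorm_stft_rpow_le hd hp₁ hp₂ hk'
  refine ⟨C.toReal ^ (1 / p), by positivity, fun h hh f => ?_⟩
  obtain ⟨u, hu⟩ := exists_schwartzMap_eq_dil hh f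
  obtain ⟨F, hF, -⟩ := exists_schwartzMap_eq_besselh k u
  have h_norm := integral_norm_rpow_rpow_le hp₀.le hC (integrable_norm_stft_rpow hp₁.le u)
    (hF ▸ integrable_norm_rpow hp₀ F) (h_le u)
  rwa [hu, besselh_dil hh, integral_norm_dil_rpow_rpow hh hp₀.ne', ← mul_assoc] at h_norm

end SemiclassicalEmbedding

theorem stmt9_general (d : ℕ) (hd : 1 ≤ d) (p : ℝ) (hp1 : 1 < p) (hp2 : p ≤ 2)
    (k : ℝ) (hk : 2 * d * (1 / p - 1 / 2) ≤ k) :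
    ∃ C > (0 : ℝ), ∀ h : ℝ, 0 < h → ∀ f : SchwartzMap (E d) ℂ,
      (∫ x : E d, ‖f x‖ ^ p) ^ (1 / p) ≤
          C * h ^ ((d : ℝ) * (1 / p - 1 / 2) / 2) *
            (∫ z : P d, ‖stft d (dil d h (⇑f)) z‖ ^ p) ^ (1 / p) ∧
      (∫ z : P d, ‖stft d (dil d h (⇑f)) z‖ ^ p) ^ (1 / p) ≤
          C * h ^ ((d : ℝ) * (1 / 2 - 1 / p) / 2) *
            (∫ x : E d, ‖besselh d h k (⇑f) x‖ ^ p) ^ (1 / p) := by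
  obtain ⟨A, hA, h_lower⟩ := exists_norm_le_stft_dil (d := d) hp1.le hp2
  obtain ⟨B, hB, h_upper⟩ := exists_stft_dil_le_norm_besselh hd hp1 hp2 hk
  refine ⟨A + B + 1, by positivity, fun h hh f =>
    ⟨(h_lower hh f).trans ?_, (h_upper hh f).trans ?_⟩⟩
  · gcongr
    linarith
  · gcongr
    linarith

/-- the semiclassical embeddings `L^p_k (scaled) ↪ M^p_ℏ ↪ L^p` for
`1 < p ≤ 2`, `k = 2d(1/p - 1/2)`, with constants uniform in `0 < ℏ ≤ 1`:
`‖f‖_{L^p} ≤ C·ℏ^{d(1/p-1/2)/2}·‖V_g(D_{ℏ^{-1/2}}f)‖_{L^p(ℝ^{2d})}` and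
`‖V_g(D_{ℏ^{-1/2}}f)‖_{L^p(ℝ^{2d})} ≤ C·ℏ^{d(1/2-1/p)/2}·‖(1-ℏΔ)^{k/2}f‖_{L^p}`. -/
theorem stmt9 (d : ℕ) (hd : 1 ≤ d) (p : ℝ) (hp1 : 1 < p) (hp2 : p ≤ 2)
    (k : ℝ) (hk : k = 2 * d * (1 / p - 1 / 2)) :
    ∃ C > (0 : ℝ), ∀ h : ℝ, 0 < h → h ≤ 1 → ∀ f : SchwartzMap (E d) ℂ,
      (∫ x : E d, ‖f x‖ ^ p) ^ (1 / p) ≤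
          C * h ^ ((d : ℝ) * (1 / p - 1 / 2) / 2) *
            (∫ z : P d, ‖stft d (dil d h (⇑f)) z‖ ^ p) ^ (1 / p) ∧
      (∫ z : P d, ‖stft d (dil d h (⇑f)) z‖ ^ p) ^ (1 / p) ≤
          C * h ^ ((d : ℝ) * (1 / 2 - 1 / p) / 2) *
            (∫ x : E d, ‖besselh d h k (⇑f) x‖ ^ p) ^ (1 / p) := by
  obtain ⟨C, hC, h_embed⟩ := stmt9_general d hd p hp1 hp2 k hk.ge
  exact ⟨C, hC, fun h hh _ => h_embed h hh⟩
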